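/- For every integer k ≥ 3 and every integer ℓ ≥ 3, there exists a real number τ > 0 such that every graph G that is C_k-free and, for every m ≥ ℓ, is (complement of C_m)-free, satisfies max(α(G), ω(G)) ≥ |G|^τ; that is, the set consisting of the cycle C_k together with the complements of all cycles of length at least ℓ has the Erdős–Hajnal property. -/

import Mathlib

open SimpleGraph

/-- The independence (stable set) number of a graph: the clique number of the complement. -/
noncomputable def alphaNum {V : Type*} (G : SimpleGraph V) : ℕ := Gᶜ.cliqueNum

/-- The clique number of a graph. -/
noncomputable def omegaNum {V : Type*} (G : SimpleGraph V) : ℕ := G.cliqueNum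

/-- κ(G) = α(G)·ω(G). -/
noncomputable def kappaNum {V : Type*} (G : SimpleGraph V) : ℕ := alphaNum G * omegaNum G

/-!
Write `κ = α ω` and call a set `X` critical if it minimises `κ / |X| ^ τ` among its subsets; in a
counterexample to `|X| ^ τ ≤ κ` there are critical sets. A critical set does not contain many large
sets that are pairwise anticomplete, or pairwise complete. By Rödl's theorem it has a linear-size
subset inducing a graph that is sparse or whose complement is sparse.

If the complement is sparse, the absence of large complete pairs lets Gyárfás' path argument grow a
long induced path in the complement and close it to a long cycle. If the graph is sparse, a critical
set, for a larger exponent, contains a comb: a vertex `v`, neighbours `a₁, …, aₜ` of `v` and large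
sets of private neighbours of the `aᵢ`. An induced path meeting `k - 3` of these sets once each
would close to a `C_k` through `v`. This yields a large pair of anticomplete or complete sets in
every large subcomb, and iterating produces enough pairwise anticomplete or complete sets to
contradict criticality. For `k = 3` and `k = 4` the order of `G` is at most `max α ω ^ 5` directly.
-/

section

open Finset
open scoped Classical

universe u

variable {V : Type*} {G : SimpleGraph V}

/-! ### Stable sets and critical sets -/

/-- `A` and `B` are anticomplete in `G`. The sets may intersect; `Anticomplete G S S` says that
`S` is stable, and `Anticomplete Gᶜ A B` that disjoint `A`, `B` are complete to each other. -/
def Anticomplete (G : SimpleGraph V) (A B : Finset V) : Prop :=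
  ∀ a ∈ A, ∀ b ∈ B, ¬ G.Adj a b

lemma Anticomplete.symm {A B : Finset V} (h : Anticomplete G A B) : Anticomplete G B A :=
  fun b hb a ha hba => h a ha b hb hba.symm

lemma Anticomplete.mono {A B A' B' : Finset V} (h : Anticomplete G A B) (hA : A' ⊆ A)
    (hB : B' ⊆ B) : Anticomplete G A' B' :=
  fun a ha b hb => h a (hA ha) b (hB hb)

lemma Anticomplete.union_left {A B C : Finset V} (hA : Anticomplete G A C)
    (hB : Anticomplete G B C) : Anticomplete G (A ∪ B) C :=
  fun x hx => (mem_union.1 hx).elim (hA x) (hB x)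

lemma Anticomplete.union_right {A B C : Finset V} (hB : Anticomplete G A B)
    (hC : Anticomplete G A C) : Anticomplete G A (B ∪ C) :=
  (hB.symm.union_left hC.symm).symm

lemma anticomplete_singleton (G : SimpleGraph V) (a : V) : Anticomplete G {a} {a} := by
  simp [Anticomplete]

lemma anticomplete_pair {a b : V} (h : ¬ G.Adj a b) : Anticomplete G {a, b} {a, b} := by
  simp [Anticomplete, h, G.adj_comm b a]

/-- The neighbours of `v` in the set `A`. -/
noncomputable def neighborsIn (G : SimpleGraph V) (v : V) (A : Finset V) : Finset V :=
  A.filter (G.Adj v)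

/-- The vertices of `A` covered by `S`, that is, having a neighbour in `S`. -/
noncomputable def covered (G : SimpleGraph V) (S A : Finset V) : Finset V :=
  {b ∈ A | ∃ a ∈ S, G.Adj a b}

lemma mem_neighborsIn {v x : V} {A : Finset V} :
    x ∈ neighborsIn G v A ↔ x ∈ A ∧ G.Adj v x := mem_filter

lemma mem_covered {x : V} {S A : Finset V} :
    x ∈ covered G S A ↔ x ∈ A ∧ ∃ a ∈ S, G.Adj a x := mem_filter

lemma neighborsIn_subset (G : SimpleGraph V) (v : V) (A : Finset V) : neighborsIn G v A ⊆ A :=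
  filter_subset _ _

lemma covered_subset (G : SimpleGraph V) (S A : Finset V) : covered G S A ⊆ A :=
  filter_subset _ _

lemma card_neighborsIn_mono (G : SimpleGraph V) (v : V) {A B : Finset V} (h : A ⊆ B) :
    (#(neighborsIn G v A) : ℝ) ≤ #(neighborsIn G v B) := by
  exact_mod_cast card_le_card (filter_subset_filter _ h)

lemma covered_empty (G : SimpleGraph V) (A : Finset V) : covered G ∅ A = ∅ := by
  simp [covered]

lemma covered_insert (G : SimpleGraph V) (v : V) (S A : Finset V) :
    covered G (insert v S) A = neighborsIn G v A ∪ covered G S A := by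
  ext x
  simp only [mem_covered, mem_neighborsIn, mem_union, mem_insert, exists_eq_or_imp]
  tauto

lemma anticomplete_sdiff_covered (G : SimpleGraph V) (S A : Finset V) :
    Anticomplete G S (A \ covered G S A) :=
  fun a ha _ hb hab => (mem_sdiff.1 hb).2 (mem_covered.2 ⟨(mem_sdiff.1 hb).1, a, ha, hab⟩)

lemma nonempty_of_cast_card_pos {A : Finset V} (h : (0 : ℝ) < #A) : A.Nonempty :=
  card_pos.1 (Nat.cast_pos.1 h)

/-- The stability number of `G[A]`. The clique number of `G[A]` is `alphaOn Gᶜ A`. -/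
noncomputable def alphaOn (G : SimpleGraph V) (A : Finset V) : ℕ :=
  {S ∈ A.powerset | Anticomplete G S S}.sup card

/-- The product of the stability number and the clique number of `G[A]`. -/
noncomputable def kappaOn (G : SimpleGraph V) (A : Finset V) : ℕ :=
  alphaOn G A * alphaOn Gᶜ A

lemma card_le_alphaOn {A S : Finset V} (hS : S ⊆ A) (h : Anticomplete G S S) :
    #S ≤ alphaOn G A :=
  le_sup (f := card) (mem_filter.2 ⟨mem_powerset.2 hS, h⟩)

lemma exists_card_eq_alphaOn (G : SimpleGraph V) (A : Finset V) :
    ∃ S ⊆ A, Anticomplete G S S ∧ #S = alphaOn G A := by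
  obtain ⟨S, hS, h⟩ := exists_mem_eq_sup {S ∈ A.powerset | Anticomplete G S S}
    ⟨∅, mem_filter.2 ⟨empty_mem_powerset A, by simp [Anticomplete]⟩⟩ card
  simp only [mem_filter, mem_powerset] at hS
  exact ⟨S, hS.1, hS.2, h.symm⟩

lemma alphaOn_mono (G : SimpleGraph V) {A B : Finset V} (h : A ⊆ B) :
    alphaOn G A ≤ alphaOn G B := by
  obtain ⟨S, hSA, hS, hcard⟩ := exists_card_eq_alphaOn G A
  exact hcard ▸ card_le_alphaOn (hSA.trans h) hS

lemma alphaOn_pos (G : SimpleGraph V) {A : Finset V} (h : A.Nonempty) : 0 < alphaOn G A := by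
  obtain ⟨a, ha⟩ := h
  exact card_le_alphaOn (singleton_subset_iff.2 ha) (anticomplete_singleton G a)

lemma two_le_alphaOn {A : Finset V} {a b : V} (ha : a ∈ A) (hb : b ∈ A) (hab : a ≠ b)
    (h : ¬ G.Adj a b) : 2 ≤ alphaOn G A :=
  card_pair hab ▸ card_le_alphaOn (insert_subset ha (singleton_subset_iff.2 hb))
    (anticomplete_pair h)

lemma alphaOn_add_le_alphaOn_union {A B : Finset V} (hd : Disjoint A B)
    (h : Anticomplete G A B) : alphaOn G A + alphaOn G B ≤ alphaOn G (A ∪ B) := by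
  obtain ⟨S, hSA, hS, hScard⟩ := exists_card_eq_alphaOn G A
  obtain ⟨T, hTB, hT, hTcard⟩ := exists_card_eq_alphaOn G B
  have hST : Anticomplete G S T := h.mono hSA hTB
  rw [← hScard, ← hTcard, ← card_union_of_disjoint (hd.mono hSA hTB)]
  exact card_le_alphaOn (union_subset_union hSA hTB)
    ((hS.union_left hST.symm).union_right (hST.union_left hT))

lemma sum_alphaOn_le_alphaOn_biUnion {F : Finset (Finset V)}
    (hF : (F : Set (Finset V)).Pairwise fun A B => Disjoint A B ∧ Anticomplete G A B) :
    ∑ A ∈ F, alphaOn G A ≤ alphaOn G (F.biUnion id) := by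
  induction F using Finset.induction_on with
  | empty => simp
  | insert A F hA ih =>
    have hAF : ∀ B ∈ F, Disjoint A B ∧ Anticomplete G A B := fun B hB =>
      hF (mem_insert_self A F) (mem_insert_of_mem hB) (ne_of_mem_of_not_mem hB hA).symm
    have hdisj : Disjoint A (F.biUnion id) :=
      (disjoint_biUnion_right _ _ _).2 fun B hB => (hAF B hB).1
    have hanti : Anticomplete G A (F.biUnion id) := fun a ha b hb =>
      let ⟨B, hB, hbB⟩ := mem_biUnion.1 hb
      (hAF B hB).2 a ha b hbB
    rw [sum_insert hA, biUnion_insert]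
    exact (Nat.add_le_add_left (ih (hF.mono (coe_subset.2 (subset_insert A F)))) _).trans
      (alphaOn_add_le_alphaOn_union hdisj hanti)

lemma kappaOn_mono (G : SimpleGraph V) {A B : Finset V} (h : A ⊆ B) : kappaOn G A ≤ kappaOn G B :=
  Nat.mul_le_mul (alphaOn_mono G h) (alphaOn_mono Gᶜ h)

lemma kappaOn_pos (G : SimpleGraph V) {A : Finset V} (h : A.Nonempty) : 0 < kappaOn G A :=
  Nat.mul_pos (alphaOn_pos G h) (alphaOn_pos Gᶜ h)

lemma kappaOn_compl (G : SimpleGraph V) (A : Finset V) : kappaOn Gᶜ A = kappaOn G A := by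
  rw [kappaOn, kappaOn, compl_compl, mul_comm]

lemma two_le_kappaOn (G : SimpleGraph V) {A : Finset V} (h : 2 ≤ #A) : 2 ≤ kappaOn G A := by
  obtain ⟨a, ha, b, hb, hab⟩ := one_lt_card.1 h
  by_cases hadj : G.Adj a b
  · have hcl : 2 ≤ alphaOn Gᶜ A := two_le_alphaOn ha hb hab (by simp [hadj])
    exact Nat.mul_le_mul (alphaOn_pos G ⟨a, ha⟩) hcl
  · exact Nat.mul_le_mul (two_le_alphaOn ha hb hab hadj) (alphaOn_pos Gᶜ ⟨a, ha⟩)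

/-- `X` contains `p` nonempty pairwise disjoint subsets with property `P`, any two of which are
in the relation `S`. -/
def HasFamily (S : Finset V → Finset V → Prop) (P : Finset V → Prop) (X : Finset V) (p : ℕ) :
    Prop :=
  ∃ F : Finset (Finset V), #F = p ∧ (∀ A ∈ F, A ⊆ X ∧ A.Nonempty ∧ P A) ∧
    (F : Set (Finset V)).Pairwise fun A B => Disjoint A B ∧ S A B

section HasFamily

variable {S S' : Finset V → Finset V → Prop} {P P' : Finset V → Prop} {X Y A B : Finset V} {p q : ℕ}

lemma HasFamily.mono (h : HasFamily S P X p) (hXY : X ⊆ Y) (hP : ∀ A ⊆ X, P A → P' A)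
    (hS : ∀ A ⊆ X, ∀ B ⊆ X, P A → P B → S A B → S' A B) : HasFamily S' P' Y p := by
  obtain ⟨F, hcard, hF, hpair⟩ := h
  refine ⟨F, hcard, fun A hA => ?_, fun A hA B hB hAB => ?_⟩
  · obtain ⟨hAX, hne, hPA⟩ := hF A hA
    exact ⟨hAX.trans hXY, hne, hP A hAX hPA⟩
  · obtain ⟨hdisj, hSAB⟩ := hpair hA hB hAB
    obtain ⟨hAX, -, hPA⟩ := hF A hA
    obtain ⟨hBX, -, hPB⟩ := hF B hB
    exact ⟨hdisj, hS A hAX B hBX hPA hPB hSAB⟩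

lemma HasFamily.of_le (h : HasFamily S P X p) (hq : q ≤ p) : HasFamily S P X q := by
  obtain ⟨F, hcard, hF, hpair⟩ := h
  obtain ⟨F', hF', hcard'⟩ := exists_subset_card_eq (hcard ▸ hq)
  exact ⟨F', hcard', fun A hA => hF A (hF' hA), hpair.mono (coe_subset.2 hF')⟩

lemma HasFamily.single (hA : A ⊆ X) (hne : A.Nonempty) (hP : P A) : HasFamily S P X 1 :=
  ⟨{A}, card_singleton A, by simp [hA, hne, hP], by simp⟩

lemma HasFamily.merge (hA : HasFamily S P A p) (hB : HasFamily S P B q) (hAX : A ⊆ X)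
    (hBX : B ⊆ X) (hd : Disjoint A B)
    (hS : ∀ A' ⊆ A, ∀ B' ⊆ B, P A' → P B' → S A' B' ∧ S B' A') : HasFamily S P X (p + q) := by
  obtain ⟨F, hcard, hF, hpair⟩ := hA
  obtain ⟨F', hcard', hF', hpair'⟩ := hB
  have hdisj : ∀ A' ∈ F, ∀ B' ∈ F', Disjoint A' B' := fun A' hA' B' hB' =>
    hd.mono (hF A' hA').1 (hF' B' hB').1
  have hFF' : Disjoint F F' := Finset.disjoint_left.2 fun C hC hC' =>
    (hF C hC).2.1.ne_empty (disjoint_self_iff_empty C |>.1 (hdisj C hC C hC'))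
  have hcross : ∀ A' ∈ F, ∀ B' ∈ F', S A' B' ∧ S B' A' := fun A' hA' B' hB' =>
    hS A' (hF A' hA').1 B' (hF' B' hB').1 (hF A' hA').2.2 (hF' B' hB').2.2
  refine ⟨F ∪ F', by rw [card_union_of_disjoint hFF', hcard, hcard'], fun C hC => ?_, ?_⟩
  · rcases mem_union.1 hC with hC | hC
    · exact ⟨(hF C hC).1.trans hAX, (hF C hC).2⟩
    · exact ⟨(hF' C hC).1.trans hBX, (hF' C hC).2⟩
  · rw [coe_union, Set.pairwise_union]
    exact ⟨hpair, hpair', fun C hC D hD _ =>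
      ⟨⟨hdisj C hC D hD, (hcross C hC D hD).1⟩, (hdisj C hC D hD).symm, (hcross C hC D hD).2⟩⟩

end HasFamily

/-- `X` minimises `kappaOn G X / #X ^ τ` among its subsets; the inequality is cleared of
denominators because the quotient is meaningless at `∅`. -/
def IsCritical (G : SimpleGraph V) (τ : ℝ) (X : Finset V) : Prop :=
  ∀ Y ⊆ X, (kappaOn G X : ℝ) * (#Y : ℝ) ^ τ ≤ kappaOn G Y * (#X : ℝ) ^ τ

lemma IsCritical.compl {τ : ℝ} {X : Finset V} (h : IsCritical G τ X) : IsCritical Gᶜ τ X :=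
  fun Y hY => by simpa only [kappaOn_compl] using h Y hY

lemma exists_isCritical_subset (G : SimpleGraph V) {τ : ℝ} (hτ : 0 < τ) {X : Finset V}
    (hX : X.Nonempty) :
    ∃ Y ⊆ X, Y.Nonempty ∧ IsCritical G τ Y ∧
      (kappaOn G Y : ℝ) * (#X : ℝ) ^ τ ≤ kappaOn G X * (#Y : ℝ) ^ τ := by
  have hpos : ∀ {Z : Finset V}, Z.Nonempty → (0 : ℝ) < (#Z : ℝ) ^ τ := fun hZ =>
    Real.rpow_pos_of_pos (Nat.cast_pos.2 hZ.card_pos) _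
  obtain ⟨Y, hY, hmin⟩ := exists_min_image {Y ∈ X.powerset | Y.Nonempty}
    (fun Y => (kappaOn G Y : ℝ) / (#Y : ℝ) ^ τ) ⟨X, by simp [hX]⟩
  simp only [mem_filter, mem_powerset] at hY hmin
  obtain ⟨hYX, hYne⟩ := hY
  have hle : ∀ Z ⊆ X, Z.Nonempty →
      (kappaOn G Y : ℝ) * (#Z : ℝ) ^ τ ≤ kappaOn G Z * (#Y : ℝ) ^ τ := fun Z hZX hZ =>
    (div_le_div_iff₀ (hpos hYne) (hpos hZ)).1 (hmin Z ⟨hZX, hZ⟩)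
  refine ⟨Y, hYX, hYne, fun Z hZ => ?_, hle X subset_rfl hX⟩
  rcases Z.eq_empty_or_nonempty with rfl | hne
  · rw [card_empty, Nat.cast_zero, Real.zero_rpow hτ.ne', mul_zero]
    positivity
  · exact hle Z (hZ.trans hYX) hne

lemma IsCritical.alphaOn_le {τ : ℝ} {X Y : Finset V} (h : IsCritical G τ X) (hX : X.Nonempty)
    (hY : Y ⊆ X) : (alphaOn G X : ℝ) * ((#Y : ℝ) / #X) ^ τ ≤ alphaOn G Y := by
  have hx : (0 : ℝ) < #X := Nat.cast_pos.2 hX.card_pos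
  have hω : (0 : ℝ) < alphaOn Gᶜ X := Nat.cast_pos.2 (alphaOn_pos Gᶜ hX)
  have hωle : (alphaOn Gᶜ Y : ℝ) ≤ alphaOn Gᶜ X := Nat.cast_le.2 (alphaOn_mono Gᶜ hY)
  have hκ := h Y hY
  simp only [kappaOn, Nat.cast_mul] at hκ
  rw [Real.div_rpow (by positivity) hx.le, ← mul_div_assoc, div_le_iff₀ (by positivity)]
  refine le_of_mul_le_mul_right ?_ hω
  calc (alphaOn G X : ℝ) * (#Y : ℝ) ^ τ * alphaOn Gᶜ X
      = alphaOn G X * alphaOn Gᶜ X * (#Y : ℝ) ^ τ := by ring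
    _ ≤ alphaOn G Y * alphaOn Gᶜ Y * (#X : ℝ) ^ τ := hκ
    _ ≤ alphaOn G Y * alphaOn Gᶜ X * (#X : ℝ) ^ τ := by gcongr
    _ = alphaOn G Y * (#X : ℝ) ^ τ * alphaOn Gᶜ X := by ring

lemma IsCritical.mul_rpow_le_one {τ : ℝ} {X : Finset V} (h : IsCritical G τ X) (hτ : 0 < τ)
    (hX : X.Nonempty) {p : ℕ} {b : ℝ} (hb : 0 ≤ b)
    (hF : HasFamily (Anticomplete G) (fun A => b ≤ #A) X p) :
    (p : ℝ) * (b / #X) ^ τ ≤ 1 := by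
  obtain ⟨F, rfl, hF, hpair⟩ := hF
  have hα : (0 : ℝ) < alphaOn G X := Nat.cast_pos.2 (alphaOn_pos G hX)
  have hsum : ∑ A ∈ F, alphaOn G A ≤ alphaOn G X :=
    (sum_alphaOn_le_alphaOn_biUnion hpair).trans
      (alphaOn_mono G (biUnion_subset.2 fun A hA => (hF A hA).1))
  refine le_of_mul_le_mul_left ?_ hα
  calc (alphaOn G X : ℝ) * (#F * (b / #X) ^ τ)
      = ∑ _A ∈ F, alphaOn G X * (b / #X) ^ τ := by rw [sum_const, nsmul_eq_mul]; ring
    _ ≤ ∑ A ∈ F, (alphaOn G A : ℝ) := sum_le_sum fun A hA => by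
        obtain ⟨hAX, -, hbA⟩ := hF A hA
        refine le_trans ?_ (h.alphaOn_le hX hAX)
        gcongr
    _ ≤ alphaOn G X * 1 := by rw [mul_one]; exact_mod_cast hsum

/-! ### Induced paths and long cycles -/

/-- `p 0, …, p r` is an induced path of `G`; the values of `p` beyond `r` are irrelevant. -/
def IsInducedPath (G : SimpleGraph V) (p : ℕ → V) (r : ℕ) : Prop :=
  ∀ i j, i < j → j ≤ r → p i ≠ p j ∧ (G.Adj (p i) (p j) ↔ j = i + 1)

lemma cycleGraph_adj_iff_of_lt {m : ℕ} {i j : Fin m} (hij : (i : ℕ) < j) :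
    (cycleGraph m).Adj i j ↔ (j : ℕ) = i + 1 ∨ ((i : ℕ) = 0 ∧ (j : ℕ) + 1 = m) := by
  have hsub : ((j - i : Fin m) : ℕ) = j - i := Fin.sub_val_of_le hij.le
  have hsub' : ((i - j : Fin m) : ℕ) = m - j + i := by
    rw [Fin.val_sub, Nat.mod_eq_of_lt (by omega)]
  rw [cycleGraph_adj']
  omega

lemma cycleGraph_isIndContained_of_forall {m : ℕ} (f : ℕ → V)
    (h : ∀ i j, i < j → j < m → f i ≠ f j ∧
      (G.Adj (f i) (f j) ↔ j = i + 1 ∨ (i = 0 ∧ j + 1 = m))) :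
    cycleGraph m ⊴ G := by
  have hlt : ∀ i j : Fin m, (i : ℕ) < j →
      f i ≠ f j ∧ (G.Adj (f i) (f j) ↔ (cycleGraph m).Adj i j) := fun i j hij =>
    ⟨(h i j hij j.2).1, (h i j hij j.2).2.trans (cycleGraph_adj_iff_of_lt hij).symm⟩
  have hinj : Function.Injective fun i : Fin m => f i := by
    intro i j hij
    by_contra hne
    rcases lt_or_gt_of_ne hne with hlt' | hgt
    · exact (hlt i j hlt').1 hij
    · exact (hlt j i hgt).1 hij.symm
  refine ⟨⟨⟨fun i => f i, hinj⟩, fun {i j} => ?_⟩⟩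
  change G.Adj (f i) (f j) ↔ (cycleGraph m).Adj i j
  rcases lt_trichotomy i j with hij | rfl | hij
  · exact (hlt i j hij).2
  · simp
  · rw [G.adj_comm, (cycleGraph m).adj_comm]
    exact (hlt j i hij).2

lemma IsInducedPath.cycleGraph_isIndContained {p q : ℕ → V} {r d : ℕ} (hp : IsInducedPath G p r)
    (hq : IsInducedPath G q d) (hr : 2 ≤ r) (hd : 2 ≤ d) (hstart : q 0 = p 0) (hend : q d = p r)
    (h : ∀ i j, 0 < i → i < r → 0 < j → j < d → p i ≠ q j ∧ ¬ G.Adj (p i) (q j)) :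
    cycleGraph (r + d) ⊴ G := by
  refine cycleGraph_isIndContained_of_forall (fun i => if i ≤ d then q i else p (r + d - i))
    fun i j hij hj => ?_
  by_cases hjd : j ≤ d
  · simp only [hjd, hij.le.trans hjd, if_true]
    refine ⟨(hq i j hij hjd).1, (hq i j hij hjd).2.trans ?_⟩
    omega
  by_cases hid : i ≤ d
  · simp only [hjd, hid, if_true, if_false]
    have hmeet : q i ≠ p (r + d - j) ∧
        (G.Adj (q i) (p (r + d - j)) ↔ (i = 0 ∧ r + d - j = 1) ∨ (i = d ∧ r + d - j + 1 = r)) := by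
      rcases Nat.eq_zero_or_pos i with rfl | hi
      · obtain ⟨hne, hadj⟩ := hp 0 (r + d - j) (by omega) (by omega)
        exact hstart ▸ ⟨hne, hadj.trans (by omega)⟩
      rcases hid.lt_or_eq with hlt | rfl
      · obtain ⟨hne, hadj⟩ := h (r + d - j) i (by omega) (by omega) hi hlt
        exact ⟨hne.symm, iff_of_false (fun h => hadj h.symm) (by omega)⟩
      · obtain ⟨hne, hadj⟩ := hp (r + i - j) r (by omega) le_rfl
        exact hend ▸ ⟨hne.symm, (G.adj_comm _ _).trans (hadj.trans (by omega))⟩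
    refine ⟨hmeet.1, hmeet.2.trans ?_⟩
    omega
  · simp only [hjd, hid, if_false]
    obtain ⟨hne, hadj⟩ := hp (r + d - j) (r + d - i) (by omega) (by omega)
    refine ⟨hne.symm, (G.adj_comm _ _).trans (hadj.trans ?_)⟩
    omega

lemma exists_adj_of_induce_connected {A C : Finset V} (hC : (G.induce (C : Set V)).Connected)
    (hAC : A ⊆ C) (hA : A.Nonempty) (hCA : (C \ A).Nonempty) :
    ∃ a ∈ A, ∃ b ∈ C \ A, G.Adj a b := by
  obtain ⟨a, ha⟩ := hA
  obtain ⟨b, hb⟩ := hCA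
  obtain ⟨hbC, hbA⟩ := mem_sdiff.1 hb
  obtain ⟨w⟩ := hC ⟨a, hAC ha⟩ ⟨b, hbC⟩
  obtain ⟨d, -, hfst, hsnd⟩ := w.exists_boundary_dart {x | (x : V) ∈ A} ha hbA
  exact ⟨d.fst, hfst, d.snd, mem_sdiff.2 ⟨d.snd.2, hsnd⟩, d.adj⟩

lemma induce_connected_of_forall_not_anticomplete {C : Finset V} (hC : C.Nonempty)
    (h : ∀ A ⊆ C, A.Nonempty → (C \ A).Nonempty → ¬ Anticomplete G A (C \ A)) :
    (G.induce (C : Set V)).Connected := by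
  obtain ⟨x, hx⟩ := hC
  rw [connected_iff_exists_forall_reachable]
  refine ⟨⟨x, hx⟩, fun y => ?_⟩
  by_contra hy
  let R : Set V := {z | ∃ hz : z ∈ C, (G.induce (C : Set V)).Reachable ⟨x, hx⟩ ⟨z, hz⟩}
  refine h {z ∈ C | z ∈ R} (filter_subset _ _) ⟨x, mem_filter.2 ⟨hx, hx, Reachable.refl _⟩⟩
    ⟨y, mem_sdiff.2 ⟨y.2, fun hyR => hy (mem_filter.1 hyR).2.2⟩⟩ fun a ha b hb hab => ?_
  obtain ⟨-, haC, hxa⟩ := mem_filter.1 ha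
  obtain ⟨hbC, hbR⟩ := mem_sdiff.1 hb
  have hadj : (G.induce (C : Set V)).Adj ⟨a, haC⟩ ⟨b, hbC⟩ := hab
  exact hbR (mem_filter.2 ⟨hbC, hbC, hxa.trans hadj.reachable⟩)

lemma induce_connected_union {A B : Finset V} (hA : (G.induce (A : Set V)).Connected)
    (hB : (G.induce (B : Set V)).Connected) {a b : V} (ha : a ∈ A) (hb : b ∈ B)
    (hab : G.Adj a b) : (G.induce ((A ∪ B : Finset V) : Set V)).Connected := by
  rw [coe_union]
  exact connected_induce_union hA.preconnected hB.preconnected ha hb hab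

lemma induce_singleton_connected (G : SimpleGraph V) (v : V) :
    (G.induce (({v} : Finset V) : Set V)).Connected := by
  rw [coe_singleton]
  exact .of_subsingleton

lemma induce_connected_insert {A : Finset V} (hA : (G.induce (A : Set V)).Connected) {v a : V}
    (ha : a ∈ A) (hva : G.Adj v a) : (G.induce ((insert v A : Finset V) : Set V)).Connected :=
  insert_eq v A ▸
    induce_connected_union (induce_singleton_connected G v) hA (mem_singleton_self v) ha hva

lemma exists_isInducedPath {C : Finset V} (hC : (G.induce (C : Set V)).Connected) {x y : V}
    (hx : x ∈ C) (hy : y ∈ C) :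
    ∃ (q : ℕ → V) (d : ℕ), IsInducedPath G q d ∧ q 0 = x ∧ q d = y ∧ ∀ i, q i ∈ C := by
  obtain ⟨w, hw⟩ := hC.exists_walk_length_eq_dist ⟨x, hx⟩ ⟨y, hy⟩
  have hdist : ∀ i ≤ w.length, (G.induce (C : Set V)).dist ⟨x, hx⟩ (w.getVert i) = i := by
    intro i hi
    rw [← length_eq_dist_of_subwalk hw (w.isSubwalk_take i), Walk.take_length, min_eq_left hi]
  refine ⟨fun i => w.getVert i, w.length, fun i j hij hj => ⟨fun heq => ?_, fun hadj => ?_, ?_⟩,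
    by simp, by simp, fun i => (w.getVert i).2⟩
  · have := hdist i (hij.le.trans hj)
    rw [Subtype.ext heq, hdist j hj] at this
    exact hij.ne' this
  · have htri := hC.dist_triangle (u := ⟨x, hx⟩) (v := w.getVert i) (w := w.getVert j)
    rw [hdist i (hij.le.trans hj), hdist j hj,
      dist_eq_one_iff_adj.2 (show (G.induce (C : Set V)).Adj _ _ from hadj)] at htri
    exact le_antisymm htri hij
  · rintro rfl
    exact w.adj_getVert_succ hj

/-- No two disjoint anticomplete subsets of `X` both have at least `θ` elements. -/
def NoAnticompletePair (G : SimpleGraph V) (X : Finset V) (θ : ℝ) : Prop :=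
  ∀ A ⊆ X, ∀ B ⊆ X, Disjoint A B → Anticomplete G A B → θ ≤ #A → (#B : ℝ) < θ

lemma NoAnticompletePair.mono {X Y : Finset V} {θ : ℝ} (h : NoAnticompletePair G X θ)
    (hYX : Y ⊆ X) : NoAnticompletePair G Y θ :=
  fun A hA B hB => h A (hA.trans hYX) B (hB.trans hYX)

lemma NoAnticompletePair.exists_giant_component {X : Finset V} {θ : ℝ}
    (h : NoAnticompletePair G X θ) (hθ : 0 < θ) (hX : 3 * θ ≤ #X) :
    ∃ C ⊆ X, (G.induce (C : Set V)).Connected ∧ Anticomplete G C (X \ C) ∧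
      (#X : ℝ) - θ < #C := by
  obtain ⟨C, hCX, hC⟩ := exists_minimal_le_of_wellFoundedLT
    (fun C : Finset V => Anticomplete G C (X \ C) ∧ (#X : ℝ) - θ < #C) X
    ⟨fun a _ b hb => by simp at hb, by linarith⟩
  obtain ⟨hCanti, hCcard⟩ := hC.prop
  have hsmall : ∀ A ⊂ C, Anticomplete G A (C \ A) → (#A : ℝ) < θ := by
    intro A hAC hA
    have hAX : A ⊆ X := hAC.subset.trans hCX
    have hAanti : Anticomplete G A (X \ A) := by
      rw [← sdiff_union_sdiff_cancel hCX hAC.subset]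
      exact (hCanti.mono hAC.subset subset_rfl).union_right hA
    have hAcard : ¬ (#X : ℝ) - θ < #A := fun hcard => hC.not_prop_of_lt hAC ⟨hAanti, hcard⟩
    by_contra! hθA
    have := h A hAX (X \ A) sdiff_subset disjoint_sdiff hAanti hθA
    rw [cast_card_sdiff hAX] at this
    linarith
  refine ⟨C, hCX, induce_connected_of_forall_not_anticomplete
    (nonempty_of_cast_card_pos (by linarith)) fun A hAC hA hCA hanti => ?_, hCanti, hCcard⟩
  have hA_lt := hsmall A (hAC.ssubset_of_ne (by rintro rfl; simp at hCA)) hanti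
  have hCA_lt := hsmall (C \ A) (sdiff_ssubset hAC hA)
    (by rw [Finset.sdiff_sdiff_eq_self hAC]; exact hanti.symm)
  rw [cast_card_sdiff hAC] at hCA_lt
  linarith

/-- `p 0, …, p r` is an induced path outside the connected set `W`, and its last vertex is the only
one with a neighbour in `W`. -/
structure IsPathToward (G : SimpleGraph V) (p : ℕ → V) (r : ℕ) (W : Finset V) : Prop where
  isInducedPath : IsInducedPath G p r
  connected : (G.induce (W : Set V)).Connected
  notMem : ∀ j ≤ r, p j ∉ W
  not_adj : ∀ j < r, ∀ w ∈ W, ¬ G.Adj (p j) w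
  exists_adj : ∃ w ∈ W, G.Adj (p r) w

lemma IsInducedPath.update_succ {p : ℕ → V} {r : ℕ} (hp : IsInducedPath G p r) {u : V}
    (hne : ∀ j ≤ r, p j ≠ u) (hadj : ∀ j ≤ r, G.Adj (p j) u ↔ j = r) :
    IsInducedPath G (Function.update p (r + 1) u) (r + 1) := by
  intro i j hij hj
  rw [Function.update_of_ne (by omega : i ≠ r + 1)]
  rcases hj.lt_or_eq with hlt | rfl
  · rw [Function.update_of_ne hlt.ne]
    exact hp i j hij (Nat.lt_succ_iff.1 hlt)
  · rw [Function.update_self, hadj i (by omega)]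
    exact ⟨hne i (by omega), by omega⟩

lemma IsPathToward.exists_extension {p : ℕ → V} {r : ℕ} {W C : Finset V}
    (h : IsPathToward G p r W) (hCW : C ⊆ W \ neighborsIn G (p r) W)
    (hC : (G.induce (C : Set V)).Connected)
    (hanti : Anticomplete G C ((W \ neighborsIn G (p r) W) \ C)) :
    ∃ u ∈ W, IsPathToward G (Function.update p (r + 1) u) (r + 1) C := by
  have hCW' : C ⊆ W := hCW.trans sdiff_subset
  obtain ⟨w, hw, hpw⟩ := h.exists_adj
  have hwC : w ∉ C := fun hwC =>
    (mem_sdiff.1 (hCW hwC)).2 (mem_neighborsIn.2 ⟨hw, hpw⟩)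
  obtain ⟨c, hc, u, hu, hcu⟩ := exists_adj_of_induce_connected h.connected hCW'
    (coe_nonempty.1 (Set.nonempty_coe_sort.1 hC.nonempty)) ⟨w, mem_sdiff.2 ⟨hw, hwC⟩⟩
  obtain ⟨huW, huC⟩ := mem_sdiff.1 hu
  have hpu : G.Adj (p r) u := by
    by_contra hpu
    exact hanti c hc u (mem_sdiff.2 ⟨mem_sdiff.2 ⟨huW, fun h => hpu (mem_neighborsIn.1 h).2⟩, huC⟩)
      hcu
  refine ⟨u, huW, h.isInducedPath.update_succ (fun j hj hju => h.notMem j hj (hju ▸ huW))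
    (fun j hj => ⟨fun hadj => ?_, fun hjr => hjr ▸ hpu⟩), hC, fun j hj => ?_, fun j hj x hx => ?_,
    c, hc, by rw [Function.update_self]; exact hcu.symm⟩
  · exact hj.eq_or_lt.resolve_right fun hlt => h.not_adj j hlt u huW hadj
  · rcases hj.lt_or_eq with hlt | rfl
    · rw [Function.update_of_ne hlt.ne]
      exact fun hjC => h.notMem j (Nat.lt_succ_iff.1 hlt) (hCW' hjC)
    · rwa [Function.update_self]
  · rw [Function.update_of_ne hj.ne]
    rcases (Nat.lt_succ_iff.1 hj).lt_or_eq with hlt | rfl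
    · exact h.not_adj j hlt x (hCW' hx)
    · exact fun hadj => (mem_sdiff.1 (hCW hx)).2 (mem_neighborsIn.2 ⟨hCW' hx, hadj⟩)

/- Gyárfás' path argument: delete the neighbourhood of the end of the path and move on to the giant
component of what is left. -/
lemma NoAnticompletePair.exists_isPathToward {W₀ : Finset V} {θ : ℝ}
    (hna : NoAnticompletePair G W₀ θ) (hθ : 0 < θ) {v : V} (hv : v ∉ W₀)
    (hdeg : ∀ u ∈ insert v W₀, (#(neighborsIn G u W₀) : ℝ) ≤ θ)
    (hconn : (G.induce (W₀ : Set V)).Connected) (hadj : ∃ w ∈ W₀, G.Adj v w) (r : ℕ)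
    (hcard : (2 * r + 4) * θ ≤ #W₀) :
    ∃ (p : ℕ → V) (W : Finset V), IsPathToward G p r W ∧ W ⊆ W₀ ∧ p 0 = v ∧
      (∀ j, 0 < j → j ≤ r → p j ∈ W₀) ∧ (#W₀ : ℝ) - 2 * r * θ ≤ #W := by
  induction r with
  | zero =>
    exact ⟨fun _ => v, W₀, ⟨fun i j _ _ => by omega, hconn, fun _ _ => hv, fun _ _ => by omega,
      hadj⟩, subset_rfl, rfl, fun _ _ => by omega, by simp⟩
  | succ r ih =>
    push_cast at hcard ⊢
    obtain ⟨p, W, hpW, hWW₀, h0, hpW₀, hWcard⟩ := ih (by linarith)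
    have hpr : p r ∈ insert v W₀ := by
      rcases Nat.eq_zero_or_pos r with rfl | hr
      · exact h0 ▸ mem_insert_self v W₀
      · exact mem_insert_of_mem (hpW₀ r hr le_rfl)
    have hdeg_r : (#(neighborsIn G (p r) W) : ℝ) ≤ θ :=
      (card_neighborsIn_mono G _ hWW₀).trans (hdeg _ hpr)
    have hrest := cast_card_sdiff (R := ℝ) (neighborsIn_subset G (p r) W)
    obtain ⟨C, hCW, hC, hCanti, hCcard⟩ :=
      (hna.mono (sdiff_subset.trans hWW₀)).exists_giant_component
        (X := W \ neighborsIn G (p r) W) hθ (by linarith)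
    obtain ⟨u, huW, hext⟩ := hpW.exists_extension hCW hC hCanti
    refine ⟨_, C, hext, hCW.trans (sdiff_subset.trans hWW₀), ?_, fun j hj hjr => ?_, by linarith⟩
    · rw [Function.update_of_ne (by omega), h0]
    · rcases hjr.lt_or_eq with hlt | rfl
      · rw [Function.update_of_ne hlt.ne]
        exact hpW₀ j hj (Nat.lt_succ_iff.1 hlt)
      · rw [Function.update_self]
        exact hWW₀ huW

lemma card_insert_union_covered_le (G : SimpleGraph V) (u : V) (E C : Finset V) :
    #(insert u E ∪ covered G (insert u E) C) ≤
      #(E ∪ covered G E C) + (#(neighborsIn G u C) + 1) := by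
  have hunion : insert u E ∪ covered G (insert u E) C =
      (E ∪ covered G E C) ∪ insert u (neighborsIn G u C) := by
    rw [covered_insert]
    ext x
    simp only [mem_union, mem_insert]
    tauto
  rw [hunion]
  exact (card_union_le _ _).trans (Nat.add_le_add_left (card_insert_le _ _) _)

lemma card_union_covered_le {C : Finset V} {θ : ℝ} (E : Finset V)
    (hdeg : ∀ v ∈ E, (#(neighborsIn G v C) : ℝ) + 1 ≤ θ) :
    (#(E ∪ covered G E C) : ℝ) ≤ #E * θ := by
  induction E using Finset.induction_on with
  | empty => simp [covered_empty]
  | insert u E hu ih =>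
    have hstep : (#(insert u E ∪ covered G (insert u E) C) : ℝ) ≤
        #(E ∪ covered G E C) + (#(neighborsIn G u C) + 1) := by
      exact_mod_cast card_insert_union_covered_le G u E C
    rw [card_insert_of_notMem hu]
    push_cast
    linarith [ih fun v hv => hdeg v (mem_insert_of_mem hv), hdeg u (mem_insert_self u E)]

lemma exists_connected_card_union_covered {C : Finset V} {θ s : ℝ}
    (hC : (G.induce (C : Set V)).Connected)
    (hdeg : ∀ v ∈ C, (#(neighborsIn G v C) : ℝ) + 1 ≤ θ) (hs : θ < s) (hsC : s ≤ #C) :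
    ∃ E ⊆ C, (G.induce (E : Set V)).Connected ∧ s ≤ #(E ∪ covered G E C) ∧
      (#(E ∪ covered G E C) : ℝ) ≤ s + θ := by
  obtain ⟨v, hv⟩ := hC.nonempty
  obtain ⟨E, hE, hmax⟩ := exists_max_image
    (C.powerset.filter fun E : Finset V =>
      (G.induce (E : Set V)).Connected ∧ (#(E ∪ covered G E C) : ℝ) < s) card
    ⟨{v}, mem_filter.2 ⟨mem_powerset.2 (singleton_subset_iff.2 hv),
      induce_singleton_connected G v, lt_of_le_of_lt (card_union_covered_le {v} fun u hu =>
        hdeg u (by rwa [mem_singleton.1 hu])) (by simpa using hs)⟩⟩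
  simp only [mem_filter, mem_powerset] at hE hmax
  obtain ⟨hEC, hEconn, hEs⟩ := hE
  have hCE : (C \ E).Nonempty := by
    rw [sdiff_nonempty]
    intro hCE
    have : (#C : ℝ) ≤ #(E ∪ covered G E C) := by
      exact_mod_cast card_le_card (hCE.trans subset_union_left)
    linarith
  obtain ⟨a, ha, u, hu, hau⟩ := exists_adj_of_induce_connected hC hEC
    (coe_nonempty.1 (Set.nonempty_coe_sort.1 hEconn.nonempty)) hCE
  obtain ⟨huC, huE⟩ := mem_sdiff.1 hu
  have hconn := induce_connected_insert hEconn ha hau.symm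
  refine ⟨insert u E, insert_subset huC hEC, hconn, ?_, ?_⟩
  · by_contra! hlt
    have := hmax (insert u E) ⟨insert_subset huC hEC, hconn, hlt⟩
    rw [card_insert_of_notMem huE] at this
    omega
  · have : (#(insert u E ∪ covered G (insert u E) C) : ℝ) ≤
        #(E ∪ covered G E C) + (#(neighborsIn G u C) + 1) := by
      exact_mod_cast card_insert_union_covered_le G u E C
    linarith [hdeg u huC]

lemma NoAnticompletePair.exists_connected_pair {X : Finset V} {θ s : ℝ}
    (hna : NoAnticompletePair G X θ) (hθ : 0 < θ)
    (hdeg : ∀ v ∈ X, (#(neighborsIn G v X) : ℝ) + 1 ≤ θ) (hs : θ < s) (hX : s + 5 * θ ≤ #X) :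
    ∃ E ⊆ X, ∃ M ⊆ X, ∃ W ⊆ X, (G.induce (E : Set V)).Connected ∧
      (G.induce (W : Set V)).Connected ∧ Disjoint E W ∧ Disjoint M W ∧ Anticomplete G E W ∧
      (∀ x ∈ M, ∃ e ∈ E, G.Adj e x) ∧ (∃ v ∈ M, ∃ w ∈ W, G.Adj v w) ∧
      s - θ < #M ∧ (#X : ℝ) - s - 3 * θ < #W := by
  obtain ⟨C, hCX, hC, -, hCcard⟩ := hna.exists_giant_component hθ (by linarith)
  obtain ⟨E, hEC, hE, hNl, hNu⟩ := exists_connected_card_union_covered (θ := θ) (s := s) hC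
    (fun v hv => by linarith [hdeg v (hCX hv), card_neighborsIn_mono G v hCX]) hs (by linarith)
  set N := E ∪ covered G E C with hN
  have hNC : N ⊆ C := union_subset hEC (covered_subset _ _ _)
  have hCN := cast_card_sdiff (R := ℝ) hNC
  obtain ⟨W, hW, hWconn, hWanti, hWcard⟩ :=
    (hna.mono (sdiff_subset.trans hCX)).exists_giant_component (X := C \ N) hθ (by linarith)
  have hWC : W ⊆ C := hW.trans sdiff_subset
  have hNW : Disjoint N W := disjoint_of_subset_right hW disjoint_sdiff
  have hEW : Disjoint E W := hNW.mono_left subset_union_left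
  have hEWanti : Anticomplete G E W := (anticomplete_sdiff_covered G E C).mono subset_rfl
    (hW.trans (sdiff_subset_sdiff subset_rfl subset_union_right))
  have hEcard : (#E : ℝ) < θ := hna W (hWC.trans hCX) E (hEC.trans hCX) hEW.symm hEWanti.symm
    (by linarith)
  have hNE : N \ E ⊆ covered G E C := by
    rw [hN, union_sdiff_left]
    exact sdiff_subset
  obtain ⟨e, he⟩ := hE.nonempty
  obtain ⟨w, hw, v, hv, hwv⟩ := exists_adj_of_induce_connected hC hWC
    (coe_nonempty.1 (Set.nonempty_coe_sort.1 hWconn.nonempty))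
    ⟨e, mem_sdiff.2 ⟨hEC he, Finset.disjoint_left.1 hEW he⟩⟩
  obtain ⟨hvC, hvW⟩ := mem_sdiff.1 hv
  have hvN : v ∈ N := by
    by_contra hvN
    exact hWanti w hw v (mem_sdiff.2 ⟨mem_sdiff.2 ⟨hvC, hvN⟩, hvW⟩) hwv
  have hvE : v ∉ E := fun hvE => hEWanti v hvE w hw hwv.symm
  refine ⟨E, hEC.trans hCX, N \ E, (sdiff_subset.trans hNC).trans hCX, W, hWC.trans hCX, hE, hWconn,
    hEW, hNW.mono_left sdiff_subset, hEWanti, fun x hx => (mem_covered.1 (hNE hx)).2,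
    ⟨v, mem_sdiff.2 ⟨hvN, hvE⟩, w, hw, hwv.symm⟩, ?_, by linarith⟩
  rw [cast_card_sdiff (subset_union_left : E ⊆ N)]
  linarith

lemma IsInducedPath.exists_cycleGraph_of_connected {p : ℕ → V} {r : ℕ} (hp : IsInducedPath G p r)
    (hr : 2 ≤ r) {D : Finset V} (hD : (G.induce (D : Set V)).Connected) (h0 : p 0 ∈ D)
    (hpr : p r ∈ D) (hfar : ∀ i, 0 < i → i < r → ∀ x ∈ D, x ≠ p 0 → x ≠ p r →
      p i ≠ x ∧ ¬ G.Adj (p i) x) :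
    ∃ m, r ≤ m ∧ cycleGraph m ⊴ G := by
  obtain ⟨q, d, hq, hq0, hqd, hqD⟩ := exists_isInducedPath hD h0 hpr
  obtain ⟨hne, hnadj⟩ := hp 0 r (by omega) le_rfl
  have hd : 2 ≤ d := by
    by_contra! hlt
    interval_cases d
    · exact hne (hq0.symm.trans hqd)
    · have hadj := (hq 0 1 one_pos le_rfl).2.2 rfl
      rw [hq0, hqd, hnadj] at hadj
      omega
  exact ⟨r + d, by omega, hp.cycleGraph_isIndContained hq hr hd hq0 hqd fun i j hi hir hj hjd =>
    hfar i hi hir (q j) (hqD j) (fun h => (hq 0 j hj hjd.le).1 (hq0.trans h.symm))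
      fun h => (hq j d hjd le_rfl).1 (h.trans hqd.symm)⟩

lemma NoAnticompletePair.exists_adj_of_far {X M W : Finset V} {θ : ℝ}
    (hna : NoAnticompletePair G X θ) (hθ : 0 ≤ θ) (hMX : M ⊆ X) (hWX : W ⊆ X) (hMW : Disjoint M W)
    {p : ℕ → V} {r : ℕ} (hdeg : ∀ j ≤ r, (#(neighborsIn G (p j) X) : ℝ) + 1 ≤ θ)
    (hM : (r + 2) * θ ≤ #M) (hW : θ ≤ #W) :
    ∃ f ∈ M, ∃ w ∈ W, G.Adj f w ∧ ∀ j ≤ r, p j ≠ f ∧ ¬ G.Adj (p j) f := by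
  set P := (range (r + 1)).image p
  have hP : ∀ j ≤ r, p j ∈ P := fun j hj => mem_image_of_mem p (mem_range.2 (Nat.lt_succ_of_le hj))
  have hPcard : (#P : ℝ) ≤ r + 1 := by exact_mod_cast card_image_le.trans (card_range _).le
  set Q := P ∪ covered G P X
  have hQcard : (#Q : ℝ) ≤ (r + 1) * θ :=
    (card_union_covered_le P (forall_mem_image.2 fun j hj =>
      hdeg j (Nat.lt_succ_iff.1 (mem_range.1 hj)))).trans (by gcongr)
  have hMcard : (#M : ℝ) ≤ #(M \ Q) + #Q := by exact_mod_cast card_le_card_sdiff_add_card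
  obtain ⟨f, hf, w, hw, hfw⟩ : ∃ f ∈ M \ Q, ∃ w ∈ W, G.Adj f w := by
    by_contra! hanti
    have := hna (M \ Q) (sdiff_subset.trans hMX) W hWX (hMW.mono_left sdiff_subset) hanti
      (by linarith)
    linarith
  obtain ⟨hfM, hfQ⟩ := mem_sdiff.1 hf
  exact ⟨f, hfM, w, hw, hfw, fun j hj => ⟨fun h => hfQ (mem_union_left _ (h ▸ hP j hj)),
    fun h => hfQ (mem_union_right _ (mem_covered.2 ⟨hMX hfM, p j, hP j hj, h⟩))⟩⟩

lemma NoAnticompletePair.exists_long_cycle {X : Finset V} {θ : ℝ} (hna : NoAnticompletePair G X θ)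
    (hθ : 0 < θ) (hdeg : ∀ v ∈ X, (#(neighborsIn G v X) : ℝ) + 1 ≤ θ) {r : ℕ} (hr : 2 ≤ r)
    (hX : (3 * r + 11) * θ ≤ #X) :
    ∃ m, r ≤ m ∧ cycleGraph m ⊴ G := by
  have hrθ : 0 ≤ r * θ := by positivity
  obtain ⟨E, -, M, hMX, W₀, hW₀X, hE, hW₀, hEW₀, hMW₀, hEW₀anti, hEM, ⟨v, hv, w₀, hw₀, hvw₀⟩,
    hMcard, hW₀card⟩ := hna.exists_connected_pair (s := (r + 3) * θ) hθ hdeg (by linarith)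
    (by linarith)
  have hdeg₀ : ∀ u ∈ insert v W₀, (#(neighborsIn G u W₀) : ℝ) ≤ θ := fun u hu => by
    linarith [hdeg u (insert_subset (hMX hv) hW₀X hu), card_neighborsIn_mono G u hW₀X]
  obtain ⟨p, W, hpW, hWW₀, h0, hpW₀, hWcard⟩ := (hna.mono hW₀X).exists_isPathToward hθ
    (Finset.disjoint_left.1 hMW₀ hv) hdeg₀ hW₀ ⟨w₀, hw₀, hvw₀⟩ r (by linarith)
  have hpX : ∀ j ≤ r, p j ∈ X := by
    intro j hj
    rcases Nat.eq_zero_or_pos j with rfl | hj0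
    · exact h0 ▸ hMX hv
    · exact hW₀X (hpW₀ j hj0 hj)
  obtain ⟨f, hfM, w, hw, hfw, hfp⟩ := hna.exists_adj_of_far hθ.le hMX (hWW₀.trans hW₀X)
    (hMW₀.mono_right hWW₀) (fun j hj => hdeg _ (hpX j hj)) (by linarith) (by linarith)
  obtain ⟨e, he, hev⟩ := hEM v hv
  obtain ⟨e', he', hef⟩ := hEM f hfM
  obtain ⟨w', hw', hpw'⟩ := hpW.exists_adj
  have hEfW := induce_connected_union (induce_connected_insert hE he' hef.symm) hpW.connected
    (mem_insert_self f E) hw hfw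
  have hD := induce_connected_insert (induce_connected_insert hEfW
    (mem_union_left _ (mem_insert_of_mem he)) hev.symm)
    (mem_insert_of_mem (mem_union_right _ hw')) hpw'
  refine hpW.isInducedPath.exists_cycleGraph_of_connected hr hD (by simp [h0]) (by simp)
    fun i hi hir x hx hx0 hxr => ?_
  have hpi : p i ∈ W₀ := hpW₀ i hi hir.le
  simp only [mem_insert, mem_union, hxr, h0 ▸ hx0, false_or] at hx
  rcases hx with (rfl | hxE) | hxW
  · exact hfp i hir.le
  · exact ⟨fun h => Finset.disjoint_left.1 hEW₀ hxE (h ▸ hpi),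
      fun h => hEW₀anti x hxE (p i) hpi h.symm⟩
  · exact ⟨fun h => hpW.notMem i hir.le (h ▸ hxW), hpW.not_adj i hir x hxW⟩

/-! ### Transversal paths and private neighbours -/

lemma exists_subset_card_covered_lt {ι : Type*} {J : Finset ι} {R : ι → Finset V} {E : Finset V}
    {t : ι → ℝ} {θ : ℝ} (ht : ∀ j ∈ J, 0 < t j)
    (hdeg : ∀ v ∈ E, ∀ j ∈ J, (#(neighborsIn G v (R j)) : ℝ) ≤ θ)
    (hE : ∃ j ∈ J, t j ≤ #(covered G E (R j))) :
    ∃ E' ⊆ E, (∃ j ∈ J, t j ≤ #(covered G E' (R j))) ∧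
      ∀ j ∈ J, (#(covered G E' (R j)) : ℝ) < t j + θ := by
  obtain ⟨E', hE'E, hE'⟩ := exists_minimal_le_of_wellFoundedLT
    (fun E' : Finset V => ∃ j ∈ J, t j ≤ #(covered G E' (R j))) E hE
  obtain ⟨j, hj, hjt⟩ := hE'.prop
  obtain ⟨x, hx⟩ : E'.Nonempty := by
    rw [nonempty_iff_ne_empty]
    rintro rfl
    rw [covered_empty, card_empty, Nat.cast_zero] at hjt
    linarith [ht j hj]
  refine ⟨E', hE'E, ⟨j, hj, hjt⟩, fun i hi => ?_⟩
  have hlt : (#(covered G (E'.erase x) (R i)) : ℝ) < t i := by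
    by_contra! hle
    exact hE'.not_prop_of_lt (erase_ssubset hx) ⟨i, hi, hle⟩
  have hunion : (#(covered G E' (R i)) : ℝ) ≤
      #(neighborsIn G x (R i)) + #(covered G (E'.erase x) (R i)) := by
    rw [← insert_erase hx, covered_insert, erase_insert_eq_erase, erase_idem]
    exact_mod_cast card_union_le _ _
  linarith [hdeg x (hE'E hx) i hi]

lemma IsInducedPath.exists_cons {p : ℕ → V} {s : ℕ} (hp : IsInducedPath G p s) {e : V}
    (hne : ∀ i ≤ s, e ≠ p i) (hadj : ∀ i ≤ s, G.Adj e (p i) ↔ i = 0) :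
    ∃ q, IsInducedPath G q (s + 1) ∧ q 0 = e ∧ ∀ i, q (i + 1) = p i := by
  refine ⟨fun i => Nat.casesOn i e p, fun i j hij hj => ?_, rfl, fun _ => rfl⟩
  obtain _ | j := j
  · omega
  obtain _ | i := i
  · exact ⟨hne j (by omega), (hadj j (by omega)).trans (by omega)⟩
  · obtain ⟨hij_ne, hij_adj⟩ := hp i j (by omega) (by omega)
    exact ⟨hij_ne, hij_adj.trans (by omega)⟩

lemma IsInducedPath.exists_transversal_cons {ι : Type*} {g : V → ι} {p : ℕ → V} {s : ℕ}
    (hp : IsInducedPath G p s) (hpg : ∀ i j, i < j → j ≤ s → g (p i) ≠ g (p j)) {e : V}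
    (hge : ∀ i ≤ s, g e ≠ g (p i)) (hadj : ∀ i ≤ s, G.Adj e (p i) ↔ i = 0) :
    ∃ q, IsInducedPath G q (s + 1) ∧ (∀ i j, i < j → j ≤ s + 1 → g (q i) ≠ g (q j)) ∧
      q 0 = e ∧ ∀ i, q (i + 1) = p i := by
  obtain ⟨q, hq, rfl, hqp⟩ := hp.exists_cons (fun i hi h => hge i hi (congrArg g h)) hadj
  refine ⟨q, hq, fun i j hij hj => ?_, rfl, hqp⟩
  obtain ⟨j, rfl⟩ := Nat.exists_eq_add_of_lt (Nat.zero_lt_of_lt hij)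
  rw [zero_add, hqp]
  obtain _ | i := i
  · exact hge j (by omega)
  · exact hqp i ▸ hpg i j (by omega) (by omega)

lemma filter_sdiff_covered (G : SimpleGraph V) (S A : Finset V) (P : V → Prop) :
    {u ∈ A \ covered G S A | P u} = {u ∈ A | P u} \ covered G S {u ∈ A | P u} := by
  ext u
  simp only [mem_filter, mem_sdiff, mem_covered]
  grind

lemma NoAnticompletePair.exists_third_covered {ι : Type*} {X E Y : Finset V} {J : Finset ι}
    {g : V → ι} {θ : ℝ} (hna : NoAnticompletePair G X θ) (hθ : 0 < θ)
    (hdeg : ∀ v ∈ X, (#(neighborsIn G v X) : ℝ) ≤ θ) (hJ : J.Nonempty) (hEX : E ⊆ X) (hYX : Y ⊆ X)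
    (hgE : ∀ u ∈ E, g u ∉ J) (hE : θ ≤ #E) (hY : ∀ j ∈ J, 3 * θ ≤ #{u ∈ Y | g u = j}) :
    ∃ E' ⊆ E, (∃ j ∈ J, (#{u ∈ Y | g u = j} / 3 : ℝ) ≤ #(covered G E' {u ∈ Y | g u = j})) ∧
      ∀ j ∈ J, (#(covered G E' {u ∈ Y | g u = j}) : ℝ) < #{u ∈ Y | g u = j} / 3 + θ := by
  obtain ⟨j, hj⟩ := hJ
  have hRX : ∀ i, {u ∈ Y | g u = i} ⊆ X := fun i => (filter_subset _ _).trans hYX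
  refine exists_subset_card_covered_lt (R := fun j => {u ∈ Y | g u = j})
    (fun i hi => by linarith [hY i hi])
    (fun v hv i _ => (card_neighborsIn_mono G v (hRX i)).trans (hdeg v (hEX hv))) ⟨j, hj, ?_⟩
  have hdisj : Disjoint E {u ∈ Y | g u = j} := Finset.disjoint_left.2 fun u hu hu' =>
    hgE u hu ((mem_filter.1 hu').2 ▸ hj)
  have huncov := hna E hEX _ (sdiff_subset.trans (hRX j)) (hdisj.mono_right sdiff_subset)
    (anticomplete_sdiff_covered G E _) hE
  rw [cast_card_sdiff (covered_subset G E _)] at huncov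
  linarith [hY j hj]

lemma NoAnticompletePair.exists_transversal_path {ι : Type*} {X : Finset V} {θ : ℝ}
    (hna : NoAnticompletePair G X θ) (hθ : 0 < θ)
    (hdeg : ∀ v ∈ X, (#(neighborsIn G v X) : ℝ) ≤ θ) (g : V → ι) {s : ℕ} {E Y : Finset V}
    {J : Finset ι} (hJ : #J = s) (hEX : E ⊆ X) (hYX : Y ⊆ X) (hgE : ∀ u ∈ E, g u ∉ J)
    (hE : 3 ^ (s + 1) * θ ≤ #E) (hY : ∀ j ∈ J, 3 ^ (s + 1) * θ ≤ #{u ∈ Y | g u = j}) :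
    ∃ p : ℕ → V, IsInducedPath G p s ∧ p 0 ∈ E ∧
      (∀ i, 0 < i → i ≤ s → p i ∈ Y ∧ g (p i) ∈ J) ∧
      ∀ i j, i < j → j ≤ s → g (p i) ≠ g (p j) := by
  induction s generalizing E Y J with
  | zero =>
    obtain ⟨e, he⟩ := nonempty_of_cast_card_pos (hE.trans_lt' (by positivity))
    exact ⟨fun _ => e, fun i j _ _ => by omega, he, fun i _ _ => by omega, fun i j _ _ => by omega⟩
  | succ s ih =>
    have hpow : θ ≤ 3 ^ s * θ := le_mul_of_one_le_left hθ.le (one_le_pow₀ (by norm_num))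
    rw [show (3 : ℝ) ^ (s + 1 + 1) * θ = 9 * (3 ^ s * θ) by ring] at hE hY
    rw [show (3 : ℝ) ^ (s + 1) * θ = 3 * (3 ^ s * θ) by ring] at ih
    obtain ⟨E', hE'E, ⟨j, hj, hcov⟩, hcov_lt⟩ := hna.exists_third_covered hθ hdeg
      (card_pos.1 (by omega)) hEX hYX hgE (by linarith) (fun j hj => by linarith [hY j hj])
    have hcovY : ∀ u ∈ covered G E' {u ∈ Y | g u = j}, u ∈ Y ∧ g u = j := fun u hu =>
      mem_filter.1 (covered_subset _ _ _ hu)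
    obtain ⟨p, hp, hp0, hpY, hpg⟩ := ih (Y := Y \ covered G E' Y)
      (by rw [card_erase_of_mem hj, hJ, Nat.add_sub_cancel])
      (fun u hu => hYX (hcovY u hu).1) (sdiff_subset.trans hYX)
      (fun u hu => by rw [(hcovY u hu).2]; exact notMem_erase j J) (by linarith [hY j hj])
      (fun i hi => by
        rw [filter_sdiff_covered, cast_card_sdiff (covered_subset _ _ _)]
        linarith [hY i (mem_of_mem_erase hi), hcov_lt i (mem_of_mem_erase hi)])
    have hpJ : ∀ i ≤ s, p i ∈ Y ∧ g (p i) ∈ J := fun i hi => by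
      rcases Nat.eq_zero_or_pos i with rfl | hi0
      · exact ⟨(hcovY _ hp0).1, (hcovY _ hp0).2 ▸ hj⟩
      · exact ⟨sdiff_subset (hpY i hi0 hi).1, mem_of_mem_erase (hpY i hi0 hi).2⟩
    obtain ⟨-, e, he, hep⟩ := mem_covered.1 hp0
    obtain ⟨q, hq, hqg, rfl, hqp⟩ := hp.exists_transversal_cons hpg (e := e)
      (fun i hi h => hgE e (hE'E he) (h ▸ (hpJ i hi).2)) fun i hi =>
        ⟨fun hadj => Nat.eq_zero_of_not_pos fun hi0 =>
          anticomplete_sdiff_covered G E' Y _ he _ (hpY i hi0 hi).1 hadj, fun h => h ▸ hep⟩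
    refine ⟨q, hq, hE'E he, fun i hi his => ?_, hqg⟩
    obtain ⟨i, rfl⟩ := Nat.exists_eq_add_of_lt hi
    rw [zero_add, hqp]
    exact hpJ i (by omega)

/-- The neighbours of `a` in `B` that are adjacent to no other vertex of `T`. -/
noncomputable def privateNeighbors (G : SimpleGraph V) (T : Finset V) (a : V) (B : Finset V) :
    Finset V :=
  {b ∈ B | G.Adj a b ∧ ∀ a' ∈ T, G.Adj a' b → a' = a}

lemma mem_privateNeighbors {T B : Finset V} {a b : V} :
    b ∈ privateNeighbors G T a B ↔ b ∈ B ∧ G.Adj a b ∧ ∀ a' ∈ T, G.Adj a' b → a' = a :=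
  mem_filter

lemma privateNeighbors_subset_neighborsIn (G : SimpleGraph V) (T : Finset V) (a : V)
    (B : Finset V) : privateNeighbors G T a B ⊆ neighborsIn G a B := fun _ hb =>
  let ⟨hB, hab, _⟩ := mem_privateNeighbors.1 hb
  mem_neighborsIn.2 ⟨hB, hab⟩

lemma privateNeighbors_mono {T T' B B' : Finset V} (a : V) (hT : T' ⊆ T) (hB : B ⊆ B') :
    privateNeighbors G T a B ⊆ privateNeighbors G T' a B' := fun _ hb =>
  let ⟨hbB, hab, huniq⟩ := mem_privateNeighbors.1 hb
  mem_privateNeighbors.2 ⟨hB hbB, hab, fun a' ha' => huniq a' (hT ha')⟩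

lemma card_covered_le_sum (G : SimpleGraph V) (M B : Finset V) :
    #(covered G M B) ≤ ∑ a ∈ M, #(neighborsIn G a B) := by
  refine (card_le_card fun b hb => ?_).trans card_biUnion_le
  obtain ⟨hbB, a, ha, hab⟩ := mem_covered.1 hb
  exact mem_biUnion.2 ⟨a, ha, mem_neighborsIn.2 ⟨hbB, hab⟩⟩

/- A covered vertex is a private neighbour of one vertex of `M` or a neighbour of two, so the sum
counts it twice. -/
lemma two_mul_card_covered_le (G : SimpleGraph V) (M B : Finset V) :
    2 * #(covered G M B) ≤ ∑ a ∈ M, (#(neighborsIn G a B) + #(privateNeighbors G M a B)) := by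
  have hcount : ∀ a ∈ M, #(neighborsIn G a B) + #(privateNeighbors G M a B) =
      ∑ b ∈ covered G M B,
        ((if G.Adj a b then 1 else 0) + if b ∈ privateNeighbors G M a B then 1 else 0) := by
    intro a ha
    rw [sum_add_distrib, ← card_filter, ← card_filter]
    congr 2
    · ext b; simp only [mem_neighborsIn, mem_filter, mem_covered]; grind
    · ext b; simp only [mem_filter, mem_covered, mem_privateNeighbors]; grind
  rw [sum_congr rfl hcount, sum_comm, mul_comm, ← smul_eq_mul]
  refine card_nsmul_le_sum _ _ _ fun b hb => ?_
  obtain ⟨hbB, a, ha, hab⟩ := mem_covered.1 hb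
  by_cases huniq : ∀ a' ∈ M, G.Adj a' b → a' = a
  · refine le_trans ?_ (single_le_sum (fun _ _ => Nat.zero_le _) ha)
    rw [if_pos hab, if_pos (mem_privateNeighbors.2 ⟨hbB, hab, huniq⟩)]
  · push Not at huniq
    obtain ⟨a', ha', hab', hne⟩ := huniq
    refine le_trans ?_ (sum_le_sum_of_subset (insert_subset ha (singleton_subset_iff.2 ha')))
    rw [sum_pair hne.symm, if_pos hab, if_pos hab']
    omega

lemma exists_subset_mul_card_le_card_covered (G : SimpleGraph V) (A B : Finset V) {δ : ℝ}
    (hδ : 0 ≤ δ) :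
    ∃ M ⊆ A, δ * #M ≤ #(covered G M B) ∧
      ∀ a ∈ A, (#(neighborsIn G a (B \ covered G M B)) : ℝ) ≤ δ := by
  obtain ⟨M, hM, hmax⟩ := exists_max_image {M ∈ A.powerset | δ * #M ≤ #(covered G M B)} card
    ⟨∅, by simp⟩
  simp only [mem_filter, mem_powerset] at hM hmax
  obtain ⟨hMA, hMcov⟩ := hM
  refine ⟨M, hMA, hMcov, fun a ha => ?_⟩
  by_cases haM : a ∈ M
  · have hempty : neighborsIn G a (B \ covered G M B) = ∅ := eq_empty_of_forall_notMem fun b hb =>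
      let ⟨hbB, hab⟩ := mem_neighborsIn.1 hb
      anticomplete_sdiff_covered G M B a haM b hbB hab
    rwa [hempty, card_empty, Nat.cast_zero]
  · by_contra! hlt
    have hdisj : Disjoint (neighborsIn G a (B \ covered G M B)) (covered G M B) :=
      disjoint_of_subset_left (neighborsIn_subset _ _ _) sdiff_disjoint
    have hsub : neighborsIn G a (B \ covered G M B) ∪ covered G M B ⊆ covered G (insert a M) B := by
      rw [covered_insert]
      exact union_subset_union (filter_subset_filter _ sdiff_subset) subset_rfl
    have hcard : (#(neighborsIn G a (B \ covered G M B)) : ℝ) + #(covered G M B) ≤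
        #(covered G (insert a M) B) := by
      exact_mod_cast (card_union_of_disjoint hdisj).symm.trans_le (card_le_card hsub)
    have hle := hmax (insert a M) ⟨insert_subset ha hMA, by
      rw [card_insert_of_notMem haM]
      push_cast
      linarith⟩
    rw [card_insert_of_notMem haM] at hle
    omega

lemma card_le_six_mul_card_filter_privateNeighbors {M B : Finset V} {Δ : ℝ} (hΔ : 0 < Δ)
    (hdeg : ∀ a ∈ M, (#(neighborsIn G a B) : ℝ) ≤ Δ)
    (hcov : 2 / 3 * Δ * #M ≤ #(covered G M B)) :
    (#M : ℝ) ≤ 6 * #{a ∈ M | Δ / 6 ≤ #(privateNeighbors G M a B)} := by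
  set T := {a ∈ M | Δ / 6 ≤ #(privateNeighbors G M a B)}
  have hterm : ∀ a ∈ M, (#(neighborsIn G a B) + #(privateNeighbors G M a B) : ℝ) ≤
      Δ + Δ / 6 + if Δ / 6 ≤ #(privateNeighbors G M a B) then Δ else 0 := by
    intro a ha
    have hle : (#(privateNeighbors G M a B) : ℝ) ≤ #(neighborsIn G a B) := by
      exact_mod_cast card_le_card (privateNeighbors_subset_neighborsIn G M a B)
    split_ifs with h <;> linarith [hdeg a ha]
  have hsum : 2 * (#(covered G M B) : ℝ) ≤ #M * (Δ + Δ / 6) + #T * Δ := by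
    calc 2 * (#(covered G M B) : ℝ)
        ≤ ∑ a ∈ M, (#(neighborsIn G a B) + #(privateNeighbors G M a B) : ℝ) := by
          exact_mod_cast two_mul_card_covered_le G M B
      _ ≤ ∑ a ∈ M, (Δ + Δ / 6 + if Δ / 6 ≤ #(privateNeighbors G M a B) then Δ else 0) :=
          sum_le_sum hterm
      _ = #M * (Δ + Δ / 6) + #T * Δ := by
          rw [sum_add_distrib, sum_const, ← sum_filter, sum_const, nsmul_eq_mul, nsmul_eq_mul]
  refine le_of_mul_le_mul_right ?_ hΔ
  linarith

lemma exists_subset_privateNeighbors_or_card_covered_le {M B : Finset V} {n Δ : ℝ} (hn : 0 ≤ n)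
    (hΔ : 0 < Δ) (hM : M.Nonempty) (hdeg : ∀ a ∈ M, (#(neighborsIn G a B) : ℝ) ≤ Δ)
    (hcov : 2 / 3 * Δ * #M ≤ #(covered G M B)) :
    (∃ T ⊆ M, T.Nonempty ∧ ∀ a ∈ T, n ≤ #(privateNeighbors G T a B) * (#T : ℝ) ^ 2) ∨
      (#(covered G M B) : ℝ) ≤ 15 * √(n * Δ) := by
  set T := {a ∈ M | Δ / 6 ≤ #(privateNeighbors G M a B)} with hT
  have hMT : (#M : ℝ) ≤ 6 * #T := card_le_six_mul_card_filter_privateNeighbors hΔ hdeg hcov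
  have hTpos : (0 : ℝ) < #T := by
    have : (0 : ℝ) < #M := Nat.cast_pos.2 hM.card_pos
    linarith
  by_cases hcomb : n ≤ Δ / 6 * (#T : ℝ) ^ 2
  · refine Or.inl ⟨T, filter_subset _ _, nonempty_of_cast_card_pos hTpos, fun a ha => ?_⟩
    have hpriv : Δ / 6 ≤ #(privateNeighbors G T a B) := (mem_filter.1 ha).2.trans (by
      exact_mod_cast card_le_card (privateNeighbors_mono a (filter_subset _ _) subset_rfl))
    exact hcomb.trans (by gcongr)
  · right
    calc (#(covered G M B) : ℝ)
        ≤ ∑ a ∈ M, (#(neighborsIn G a B) : ℝ) := by exact_mod_cast card_covered_le_sum G M B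
      _ ≤ #M * Δ := by simpa only [nsmul_eq_mul] using sum_le_card_nsmul M _ Δ hdeg
      _ ≤ 6 * #T * Δ := by gcongr
      _ ≤ 15 * √(n * Δ) := by
        refine (sq_le_sq₀ (by positivity) (by positivity)).1 ?_
        rw [mul_pow 15, Real.sq_sqrt (by positivity)]
        nlinarith

lemma sqrt_mul_two_thirds_mul_le {n Δ : ℝ} (hn : 0 ≤ n) (hΔ : 0 ≤ Δ) :
    √(n * (2 / 3 * Δ)) ≤ 0.82 * √(n * Δ) := by
  rw [Real.sqrt_le_left (by positivity), mul_pow, Real.sq_sqrt (by positivity)]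
  nlinarith [mul_nonneg hn hΔ]

/- Either `M` yields a comb, or it covers few vertices and the degrees of those left uncovered drop
by a factor `2 / 3`; then the bound is a geometric series, `15 + 0.82 * 100 ≤ 100`. -/
lemma exists_subset_privateNeighbors_or_card_le (G : SimpleGraph V) {A B : Finset V} {n Δ : ℝ}
    (hn : 0 ≤ n) (hcov : ∀ b ∈ B, ∃ a ∈ A, G.Adj a b)
    (hdeg : ∀ a ∈ A, (#(neighborsIn G a B) : ℝ) ≤ Δ) :
    (∃ T ⊆ A, T.Nonempty ∧ ∀ a ∈ T, n ≤ #(privateNeighbors G T a B) * (#T : ℝ) ^ 2) ∨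
      (#B : ℝ) ≤ 100 * √(n * Δ) := by
  induction B using Finset.strongInduction generalizing Δ with
  | H B ih =>
  rcases B.eq_empty_or_nonempty with rfl | ⟨b, hb⟩
  · simp
  obtain ⟨a₁, ha₁, hab₁⟩ := hcov b hb
  obtain ⟨a₀, ha₀, hmax⟩ := exists_max_image A (fun a => #(neighborsIn G a B)) ⟨a₁, ha₁⟩
  have hΔ₀ : (0 : ℝ) < #(neighborsIn G a₀ B) := Nat.cast_pos.2
    ((card_pos.2 ⟨b, mem_neighborsIn.2 ⟨hb, hab₁⟩⟩).trans_le (hmax a₁ ha₁))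
  have hdeg₀ : ∀ a ∈ A, (#(neighborsIn G a B) : ℝ) ≤ #(neighborsIn G a₀ B) :=
    fun a ha => Nat.cast_le.2 (hmax a ha)
  have hle : (#(neighborsIn G a₀ B) : ℝ) ≤ Δ := hdeg a₀ ha₀
  set Δ₀ := (#(neighborsIn G a₀ B) : ℝ) with hΔ₀_def
  obtain ⟨M, hMA, hMcov, hMdeg⟩ := exists_subset_mul_card_le_card_covered G A B
    (δ := 2 / 3 * Δ₀) (by positivity)
  have hM : M.Nonempty := by
    rw [nonempty_iff_ne_empty]
    rintro rfl
    have := hMdeg a₀ ha₀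
    rw [covered_empty, sdiff_empty, ← hΔ₀_def] at this
    linarith
  have hcard := cast_card_sdiff (R := ℝ) (covered_subset G M B)
  have hssub : B \ covered G M B ⊂ B := sdiff_ssubset (covered_subset _ _ _)
    (nonempty_of_cast_card_pos (lt_of_lt_of_le (by have := hM.card_pos; positivity) hMcov))
  rcases ih _ hssub (fun b hb => hcov b (sdiff_subset hb)) hMdeg with ⟨T, hTA, hT, hpriv⟩ | hrest
  · refine Or.inl ⟨T, hTA, hT, fun a ha => (hpriv a ha).trans ?_⟩
    gcongr
    exact privateNeighbors_mono a subset_rfl sdiff_subset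
  rcases exists_subset_privateNeighbors_or_card_covered_le hn hΔ₀ hM
    (fun a ha => hdeg₀ a (hMA ha)) hMcov with ⟨T, hTM, hT, hpriv⟩ | hfew
  · exact Or.inl ⟨T, hTM.trans hMA, hT, hpriv⟩
  · have hsqrt := sqrt_mul_two_thirds_mul_le hn hΔ₀.le
    have hmono : √(n * Δ₀) ≤ √(n * Δ) := Real.sqrt_le_sqrt (by gcongr)
    exact Or.inr (by linarith [Real.sqrt_nonneg (n * Δ₀)])

lemma exists_finset_card_filter_mem_Icc {α β : Type*} {X : Finset α} (a : α → β) {s : ℝ}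
    (hs : 0 ≤ s) (hfib : ∀ x, (#{u ∈ X | a u = x} : ℝ) ≤ s) (hX : s ≤ #X) :
    ∃ T : Finset β, (#{u ∈ X | a u ∈ T} : ℝ) ∈ Set.Icc s (2 * s) := by
  obtain ⟨T, -, hT⟩ := exists_minimal_le_of_wellFoundedLT
    (fun T : Finset β => s ≤ #{u ∈ X | a u ∈ T}) (X.image a)
    (by rwa [filter_true_of_mem fun u hu => mem_image_of_mem a hu])
  refine ⟨T, hT.prop, ?_⟩
  rcases T.eq_empty_or_nonempty with rfl | ⟨x, hx⟩
  · simpa using hs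
  · have hlt : (#{u ∈ X | a u ∈ T.erase x} : ℝ) < s :=
      not_le.1 (hT.not_prop_of_lt (erase_ssubset hx))
    have hsub : {u ∈ X | a u ∈ T} ⊆ {u ∈ X | a u ∈ T.erase x} ∪ {u ∈ X | a u = x} := by
      intro u
      simp only [mem_filter, mem_union, mem_erase]
      tauto
    have hcard : (#{u ∈ X | a u ∈ T} : ℝ) ≤ #{u ∈ X | a u ∈ T.erase x} + #{u ∈ X | a u = x} := by
      exact_mod_cast (card_le_card hsub).trans (card_union_le _ _)
    linarith [hfib x]

lemma exists_grouping {α β : Type*} {X : Finset α} (a : α → β) {s : ℝ} (hs : 0 ≤ s) {L : ℕ}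
    (hfib : ∀ x, (#{u ∈ X | a u = x} : ℝ) ≤ s) (hX : 2 * s * L ≤ #X) :
    ∃ g : β → ℕ, ∀ j < L, s ≤ #{u ∈ X | g (a u) = j} := by
  induction L generalizing X with
  | zero => exact ⟨fun _ => 0, fun j hj => absurd hj j.not_lt_zero⟩
  | succ L ih =>
    push_cast at hX
    have hsL : 0 ≤ s * L := by positivity
    obtain ⟨T, hTs, hT2s⟩ := exists_finset_card_filter_mem_Icc a hs hfib (by linarith)
    have hsplit : (#{u ∈ X | a u ∈ T} + #{u ∈ X | a u ∉ T} : ℝ) = #X := by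
      exact_mod_cast card_filter_add_card_filter_not (s := X) (fun u => a u ∈ T)
    obtain ⟨g, hg⟩ := ih (X := {u ∈ X | a u ∉ T})
      (fun x => le_trans (by
        exact_mod_cast card_le_card (filter_subset_filter _ (filter_subset _ _))) (hfib x))
      (by linarith)
    refine ⟨fun x => if x ∈ T then L else g x, fun j hj => ?_⟩
    rcases (Nat.lt_succ_iff.1 hj).lt_or_eq with hlt | rfl
    · refine (hg j hlt).trans (Nat.cast_le.2 (card_le_card fun u hu => ?_))
      simp only [mem_filter] at hu ⊢
      rw [if_neg hu.1.2]
      exact ⟨hu.1.1, hu.2⟩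
    · refine hTs.trans (Nat.cast_le.2 (card_le_card fun u hu => ?_))
      simp only [mem_filter] at hu ⊢
      exact ⟨hu.1, if_pos hu.2⟩

/-! ### Rödl's theorem -/

/-- `X` contains a family of `p` sets pairwise in relation `S` and a family of `q` sets pairwise
in relation `S'`, all with property `P`, where `2 ^ D ≤ p * q`. The two families are bounded
through their product, which doubles when either of them is merged with a second one. -/
def HasFamilyPair (S S' : Finset V → Finset V → Prop) (P : Finset V → Prop) (X : Finset V)
    (D : ℕ) : Prop :=
  ∃ p q : ℕ, 2 ^ D ≤ p * q ∧ HasFamily S P X p ∧ HasFamily S' P X q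

section HasFamilyPair

variable {S S' : Finset V → Finset V → Prop} {P : Finset V → Prop} {X A B : Finset V} {D : ℕ}

lemma HasFamilyPair.symm (h : HasFamilyPair S S' P X D) : HasFamilyPair S' S P X D := by
  obtain ⟨p, q, hpq, hp, hq⟩ := h
  exact ⟨q, p, by rwa [mul_comm], hq, hp⟩

lemma HasFamilyPair.single (hA : A ⊆ X) (hne : A.Nonempty) (hP : P A) :
    HasFamilyPair S S' P X 0 :=
  ⟨1, 1, le_rfl, .single hA hne hP, .single hA hne hP⟩

lemma HasFamilyPair.merge (hA : HasFamilyPair S S' P A D) (hB : HasFamilyPair S S' P B D)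
    (hAX : A ⊆ X) (hBX : B ⊆ X) (hd : Disjoint A B)
    (hS : ∀ A' ⊆ A, ∀ B' ⊆ B, P A' → P B' → S A' B' ∧ S B' A') :
    HasFamilyPair S S' P X (D + 1) := by
  obtain ⟨p₁, q₁, h₁, hp₁, hq₁⟩ := hA
  obtain ⟨p₂, q₂, h₂, hp₂, hq₂⟩ := hB
  have hp := hp₁.merge hp₂ hAX hBX hd hS
  rcases le_total q₁ q₂ with hq | hq
  · refine ⟨p₁ + p₂, q₂, ?_, hp, hq₂.mono hBX (fun _ _ h => h) fun _ _ _ _ _ _ h => h⟩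
    rw [pow_succ]
    nlinarith [Nat.mul_le_mul_left p₁ hq]
  · refine ⟨p₁ + p₂, q₁, ?_, hp, hq₁.mono hAX (fun _ _ h => h) fun _ _ _ _ _ _ h => h⟩
    rw [pow_succ]
    nlinarith [Nat.mul_le_mul_left p₂ hq]

lemma HasFamilyPair.hasFamily_or_hasFamily {d : ℕ} (h : HasFamilyPair S S' P X (2 * d)) :
    HasFamily S P X (2 ^ d) ∨ HasFamily S' P X (2 ^ d) := by
  obtain ⟨p, q, hpq, hp, hq⟩ := h
  by_contra! hcon
  have hp' : p < 2 ^ d := not_le.1 fun h => hcon.1 (hp.of_le h)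
  have hq' : q < 2 ^ d := not_le.1 fun h => hcon.2 (hq.of_le h)
  rw [two_mul, pow_add] at hpq
  exact absurd hpq (not_le.2 (Nat.mul_lt_mul'' hp' hq'))

end HasFamilyPair

/-- Every vertex of `A` is adjacent to at most a proportion `ε` of `B`. -/
def IsSparseTo (G : SimpleGraph V) (ε : ℝ) (A B : Finset V) : Prop :=
  ∀ a ∈ A, (#(neighborsIn G a B) : ℝ) ≤ ε * #B

lemma IsSparseTo.mono {ε ε' : ℝ} {A B : Finset V} (h : IsSparseTo G ε A B) (hε : ε ≤ ε') :
    IsSparseTo G ε' A B :=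
  fun a ha => (h a ha).trans (by gcongr)

lemma isSparseTo_singleton (G : SimpleGraph V) {ε : ℝ} (hε : 0 ≤ ε) (a : V) :
    IsSparseTo G ε {a} {a} := by
  have hempty : neighborsIn G a {a} = ∅ :=
    filter_eq_empty_iff.2 fun b hb => by simp [mem_singleton.1 hb]
  intro b hb
  rw [mem_singleton.1 hb, hempty]
  simpa using hε

lemma exists_mem_forall_le_card_filter_adj_iff {ι : Type*} {J : Finset ι} {R : ι → Finset V}
    (Q : ι → Prop) {A : Finset V} {ε s : ℝ} (hA : #J * s < #A) (hd : ∀ j ∈ J, Disjoint A (R j))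
    (h : ∀ j ∈ J, ∀ A' ⊆ A, s ≤ #A' →
      ¬ IsSparseTo G ε A' (R j) ∧ ¬ IsSparseTo Gᶜ ε A' (R j)) :
    ∃ a ∈ A, ∀ j ∈ J, ε * #(R j) ≤ #{w ∈ R j | G.Adj a w ↔ Q j} := by
  set bad : ι → Finset V := fun j => {a ∈ A | (#{w ∈ R j | G.Adj a w ↔ Q j} : ℝ) < ε * #(R j)}
  have hbad : ∀ j ∈ J, (#(bad j) : ℝ) ≤ s := by
    intro j hj
    by_contra! hlt
    have hsub : bad j ⊆ A := filter_subset _ _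
    obtain ⟨hG, hGc⟩ := h j hj (bad j) hsub hlt.le
    by_cases hQ : Q j
    · refine hG fun a ha => ?_
      simpa only [hQ, iff_true, neighborsIn] using (mem_filter.1 ha).2.le
    · refine hGc fun a ha => ?_
      have hcompl : neighborsIn Gᶜ a (R j) = {w ∈ R j | G.Adj a w ↔ Q j} := by
        ext w
        rw [mem_neighborsIn, mem_filter]
        refine and_congr_right fun hw => ?_
        have hne : a ≠ w := fun haw => Finset.disjoint_left.1 (hd j hj) (hsub ha) (haw ▸ hw)
        simp [compl_adj, hne, hQ]
      exact hcompl ▸ (mem_filter.1 ha).2.le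
  have hlt : (#(J.biUnion bad) : ℝ) < #A := by
    refine lt_of_le_of_lt ?_ hA
    calc (#(J.biUnion bad) : ℝ) ≤ ∑ j ∈ J, (#(bad j) : ℝ) := mod_cast card_biUnion_le
      _ ≤ #J * s := by simpa only [nsmul_eq_mul] using sum_le_card_nsmul J _ s hbad
  obtain ⟨a, ha, hgood⟩ := exists_mem_notMem_of_card_lt_card (Nat.cast_lt.1 hlt)
  refine ⟨a, ha, fun j hj => not_lt.1 fun hlt => hgood ?_⟩
  exact mem_biUnion.2 ⟨j, hj, mem_filter.2 ⟨ha, hlt⟩⟩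

lemma exists_forall_adj_iff_of_not_isSparseTo {k : ℕ} (H : SimpleGraph (Fin k))
    {W : Fin k → Finset V} {ε s : ℝ} (hε : 0 < ε) (hε1 : ε ≤ 1) (hs : 0 < s)
    (hd : Pairwise fun i j => Disjoint (W i) (W j)) (hW : ∀ i, k * s ≤ ε ^ k * #(W i))
    (h : ∀ i j, i < j → ∀ A ⊆ W i, ∀ B ⊆ W j, s ≤ #A → s ≤ #B →
      ¬ IsSparseTo G ε A B ∧ ¬ IsSparseTo Gᶜ ε A B) :
    ∃ x : Fin k → V, (∀ i, x i ∈ W i) ∧ ∀ i j, i < j → (G.Adj (x i) (x j) ↔ H.Adj i j) := by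
  induction k with
  | zero => exact ⟨Fin.elim0, fun i => i.elim0, fun i => i.elim0⟩
  | succ k ih =>
    push_cast at hW
    have hks : 0 ≤ k * s := by positivity
    have hWcard : ∀ i, (k + 1) * s ≤ #(W i) := fun i =>
      (hW i).trans (mul_le_of_le_one_left (by positivity) (pow_le_one₀ hε.le hε1))
    obtain ⟨a, ha, hcard⟩ := exists_mem_forall_le_card_filter_adj_iff (G := G) (ε := ε) (s := s)
      (J := univ) (R := fun j : Fin k => W j.succ) (fun j => H.Adj 0 j.succ) (A := W 0)
      (by rw [card_univ, Fintype.card_fin]; linarith [hWcard 0])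
      (fun j _ => hd j.succ_ne_zero.symm)
      (fun j _ A hA hsA =>
        h 0 j.succ j.succ_pos A hA _ subset_rfl hsA (by linarith [hWcard j.succ]))
    set W' : Fin k → Finset V := fun j => {w ∈ W j.succ | G.Adj a w ↔ H.Adj 0 j.succ}
    have hW' : ∀ j, W' j ⊆ W j.succ := fun j => filter_subset _ _
    have hW'card : ∀ j, k * s ≤ ε ^ k * #(W' j) := fun j => by
      calc k * s ≤ ε ^ (k + 1) * #(W j.succ) := by linarith [hW j.succ]
        _ = ε ^ k * (ε * #(W j.succ)) := by ring
        _ ≤ ε ^ k * #(W' j) := by gcongr; exact hcard j (mem_univ j)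
    obtain ⟨x, hx, hadj⟩ := ih (H.comap Fin.succ)
      (fun i j hij => (hd ((Fin.succ_injective k).ne hij)).mono (hW' i) (hW' j)) hW'card
      (fun i j hij A hA B hB => h i.succ j.succ (Fin.succ_lt_succ_iff.2 hij) A (hA.trans (hW' i)) B
        (hB.trans (hW' j)))
    refine ⟨Fin.cons a x, Fin.cases ha fun i => hW' i (hx i), Fin.cases ?_ fun i => ?_⟩
    · exact Fin.cases (fun h => absurd h (lt_irrefl 0)) fun j _ => (mem_filter.1 (hx j)).2
    · exact Fin.cases (fun h => absurd h (Fin.not_lt_zero _)) fun j hij =>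
        hadj i j (Fin.succ_lt_succ_iff.1 hij)

lemma exists_isSparseTo_or_of_not_isIndContained {k : ℕ} {H : SimpleGraph (Fin k)}
    (hH : ¬ H ⊴ G) {W : Fin k → Finset V} {ε s : ℝ} (hε : 0 < ε) (hε1 : ε ≤ 1) (hs : 0 < s)
    (hd : Pairwise fun i j => Disjoint (W i) (W j)) (hW : ∀ i, k * s ≤ ε ^ k * #(W i)) :
    ∃ i j, i < j ∧ ∃ A ⊆ W i, ∃ B ⊆ W j, s ≤ #A ∧ s ≤ #B ∧
      (IsSparseTo G ε A B ∨ IsSparseTo Gᶜ ε A B) := by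
  by_contra! hcon
  obtain ⟨x, hx, hadj⟩ := exists_forall_adj_iff_of_not_isSparseTo H hε hε1 hs hd hW hcon
  have hinj : Function.Injective x := fun i j hij => by
    by_contra hne
    exact Finset.disjoint_left.1 (hd hne) (hx i) (hij ▸ hx j)
  refine hH ⟨⟨⟨x, hinj⟩, fun {i j} => ?_⟩⟩
  change G.Adj (x i) (x j) ↔ H.Adj i j
  rcases lt_trichotomy i j with hij | rfl | hij
  · exact hadj i j hij
  · simp only [SimpleGraph.irrefl]
  · rw [G.adj_comm, H.adj_comm, hadj j i hij]

lemma exists_disjoint_isSparseTo_or {k : ℕ} {H : SimpleGraph (Fin k)} (hH : ¬ H ⊴ G)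
    {X : Finset V} {ε s : ℝ} (hk : 1 ≤ k) (hε : 0 < ε) (hε1 : ε ≤ 1) (hs : 0 < s)
    (hkX : 2 * k ≤ #X) (hX : 2 * k ^ 2 * s ≤ ε ^ k * #X) :
    ∃ A ⊆ X, ∃ B ⊆ X, Disjoint A B ∧ s ≤ #A ∧ s ≤ #B ∧
      (IsSparseTo G ε A B ∨ IsSparseTo Gᶜ ε A B) := by
  have : (0 : ℝ) < k := Nat.cast_pos.2 hk
  have hkX' : (2 * k : ℝ) ≤ #X := mod_cast hkX
  have hN : (1 : ℝ) ≤ #X / (2 * k) := by rwa [le_div_iff₀ (by positivity), one_mul]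
  obtain ⟨g, hg⟩ := exists_grouping (X := X) id (s := #X / (2 * k)) (by positivity) (L := k)
    (fun x => hN.trans' (mod_cast card_le_one.2 fun a ha b hb =>
      (mem_filter.1 ha).2.trans (mem_filter.1 hb).2.symm)) (le_of_eq (by field_simp))
  have hd : Pairwise fun i j : Fin k =>
      Disjoint {u ∈ X | g (id u) = (i : ℕ)} {u ∈ X | g (id u) = (j : ℕ)} := fun i j hij =>
    Finset.disjoint_left.2 fun u hi hj =>
      hij (Fin.ext ((mem_filter.1 hi).2.symm.trans (mem_filter.1 hj).2))
  obtain ⟨i, j, hij, A, hA, B, hB, hsA, hsB, h⟩ :=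
    exists_isSparseTo_or_of_not_isIndContained hH hε hε1 hs hd fun i =>
      calc k * s = 2 * k ^ 2 * s / (2 * k) := by field_simp
        _ ≤ ε ^ k * #X / (2 * k) := by gcongr
        _ = ε ^ k * (#X / (2 * k)) := by ring
        _ ≤ _ := by gcongr; exact hg i i.2
  exact ⟨A, hA.trans (filter_subset _ _), B, hB.trans (filter_subset _ _),
    (hd hij.ne).mono hA hB, hsA, hsB, h⟩

lemma card_interedges_eq_sum (G : SimpleGraph V) (A B : Finset V) :
    #(G.interedges A B) = ∑ a ∈ A, #(neighborsIn G a B) := by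
  simp only [SimpleGraph.interedges, Rel.interedges, neighborsIn, card_filter, sum_product]

lemma card_interedges_symm (G : SimpleGraph V) (A B : Finset V) :
    #(G.interedges A B) = #(G.interedges B A) :=
  haveI := G.symm
  Rel.card_interedges_comm A B

/-- At most `s` pairs `(a, b)` with `a ∈ A` and `b ∈ B` are adjacent. -/
def HasFewEdges (G : SimpleGraph V) (s : ℝ) (A B : Finset V) : Prop :=
  (#(G.interedges A B) : ℝ) ≤ s

lemma HasFewEdges.symm {s : ℝ} {A B : Finset V} (h : HasFewEdges G s A B) :
    HasFewEdges G s B A :=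
  (Nat.cast_le.2 (card_interedges_symm G B A).le).trans h

lemma HasFewEdges.mono {s : ℝ} {A B A' B' : Finset V} (h : HasFewEdges G s A B) (hA : A' ⊆ A)
    (hB : B' ⊆ B) : HasFewEdges G s A' B' :=
  (Nat.cast_le.2 (card_le_card (Rel.interedges_mono hA hB))).trans h

lemma IsSparseTo.hasFewEdges {ε : ℝ} {A B : Finset V} (h : IsSparseTo G ε A B) :
    HasFewEdges G (#A * (ε * #B)) A B := by
  rw [HasFewEdges, card_interedges_eq_sum, Nat.cast_sum, ← nsmul_eq_mul]
  exact sum_le_card_nsmul _ _ _ h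

lemma exists_subset_forall_card_neighborsIn_le {A B : Finset V} {s : ℝ}
    (h : HasFewEdges G (#B * s) B A) :
    ∃ B' ⊆ B, #B ≤ 2 * #B' ∧ ∀ b ∈ B', (#(neighborsIn G b A) : ℝ) ≤ 2 * s := by
  refine ⟨{b ∈ B | (#(neighborsIn G b A) : ℝ) ≤ 2 * s}, filter_subset _ _, ?_,
    fun b hb => (mem_filter.1 hb).2⟩
  set C := {b ∈ B | ¬ (#(neighborsIn G b A) : ℝ) ≤ 2 * s}
  have hsplit := card_filter_add_card_filter_not (s := B)
    fun b => (#(neighborsIn G b A) : ℝ) ≤ 2 * s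
  by_contra! hlt
  have hBC : #B < 2 * #C := by lia
  have hsum : #C * (2 * s) < #B * s := by
    calc #C * (2 * s) = ∑ _b ∈ C, 2 * s := by rw [sum_const, nsmul_eq_mul]
      _ < ∑ b ∈ C, (#(neighborsIn G b A) : ℝ) :=
        sum_lt_sum_of_nonempty (card_pos.1 (by lia)) fun b hb => not_le.1 (mem_filter.1 hb).2
      _ ≤ ∑ b ∈ B, (#(neighborsIn G b A) : ℝ) :=
        sum_le_sum_of_subset_of_nonneg (filter_subset _ _) fun _ _ _ => Nat.cast_nonneg _
      _ ≤ #B * s := by rwa [← Nat.cast_sum, ← card_interedges_eq_sum]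
  have hs : 0 ≤ s := by
    have hB : (0 : ℝ) < #B := Nat.cast_pos.2 (by lia)
    exact nonneg_of_mul_nonneg_right ((Nat.cast_nonneg _).trans h) hB
  have hBC' : (#B : ℝ) ≤ 2 * #C := mod_cast hBC.le
  nlinarith [mul_le_mul_of_nonneg_right hBC' hs]

lemma IsSparseTo.exists_trim {A B : Finset V} {ε : ℝ} {M : ℕ} (h : IsSparseTo G ε A B)
    (hA : M ≤ #A) (hB : 2 * M ≤ #B) :
    ∃ A' ⊆ A, ∃ B' ⊆ B, #A' = M ∧ #B' = M ∧ IsSparseTo G (2 * ε) B' A' := by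
  obtain ⟨A', hA', hA'card⟩ := exists_subset_card_eq hA
  have hedges : HasFewEdges G (#B * (ε * M)) B A' := by
    have hA'B : IsSparseTo G ε A' B := fun a ha => h a (hA' ha)
    have := hA'B.hasFewEdges.symm
    rwa [hA'card, show (M : ℝ) * (ε * #B) = #B * (ε * M) by ring] at this
  obtain ⟨C, hCB, hCcard, hC⟩ := exists_subset_forall_card_neighborsIn_le hedges
  obtain ⟨B', hB', hB'card⟩ := exists_subset_card_eq (by lia : M ≤ #C)
  refine ⟨A', hA', B', hB'.trans hCB, hA'card, hB'card, fun b hb => ?_⟩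
  rw [hA'card, mul_assoc]
  exact hC b (hB' hb)

lemma HasFamilyPair.of_isSparseTo {S' : Finset V → Finset V → Prop} {A B X : Finset V}
    {ε s : ℝ} {m M D : ℕ} (h : IsSparseTo G ε A B) (hAX : A ⊆ X) (hBX : B ⊆ X)
    (hd : Disjoint A B) (hA : M ≤ #A) (hB : 2 * M ≤ #B) (hs : m * (2 * ε * M) ≤ s)
    (hrec : ∀ Y : Finset V, #Y = M →
      HasFamilyPair (HasFewEdges G s) S' (fun A => #A = m) Y D) :
    HasFamilyPair (HasFewEdges G s) S' (fun A => #A = m) X (D + 1) := by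
  obtain ⟨A', hA', B', hB', hA'card, hB'card, hsparse⟩ := h.exists_trim hA hB
  refine (hrec A' hA'card).merge (hrec B' hB'card) (hA'.trans hAX) (hB'.trans hBX)
    (hd.mono hA' hB') fun A₁ hA₁ B₁ hB₁ _ hB₁card => ?_
  have hle : HasFewEdges G s B₁ A₁ := by
    have hB₁A' : IsSparseTo G (2 * ε) B₁ A' := fun b hb => hsparse b (hB₁ hb)
    refine (hB₁A'.hasFewEdges.mono subset_rfl hA₁).trans ?_
    rwa [hB₁card, hA'card]
  exact ⟨hle.symm, hle⟩

lemma hasFamilyPair_hasFewEdges_succ {k : ℕ} {H : SimpleGraph (Fin k)} (hH : ¬ H ⊴ G)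
    {X : Finset V} {ε c : ℝ} {m D : ℕ} (hk : 1 ≤ k) (hε : 0 < ε) (hc : 0 < c) (hεc : ε * c ≤ 4)
    (hc1 : c ≤ 1) (hm : 1 ≤ m) (hX : 8 * k ^ 2 * m ≤ c * (ε * c / 4) ^ k * #X)
    (hrec : ∀ Y : Finset V, m ≤ c * #Y → HasFamilyPair (HasFewEdges G (ε * m ^ 2))
      (HasFewEdges Gᶜ (ε * m ^ 2)) (fun A => #A = m) Y D) :
    HasFamilyPair (HasFewEdges G (ε * m ^ 2)) (HasFewEdges Gᶜ (ε * m ^ 2)) (fun A => #A = m) X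
      (D + 1) := by
  have hk' : (1 : ℝ) ≤ k := Nat.one_le_cast.2 hk
  have hm' : (1 : ℝ) ≤ m := Nat.one_le_cast.2 hm
  set ε' := ε * c / 4 with hε'_def
  have hε' : 0 < ε' := by positivity
  have hε'1 : ε' ≤ 1 := by linarith
  have hkX : (2 * k : ℝ) ≤ #X := by
    have hpow : c * ε' ^ k ≤ 1 := mul_le_one₀ hc1 (by positivity) (pow_le_one₀ hε'.le hε'1)
    have hle : 8 * (k : ℝ) ^ 2 * m ≤ #X := hX.trans (mul_le_of_le_one_left (by positivity) hpow)
    nlinarith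
  set M := ⌈(m : ℝ) / c⌉₊
  have hMge : (m : ℝ) / c ≤ M := Nat.le_ceil _
  have hMle : (M : ℝ) ≤ 2 * (m / c) := by
    have hone : 1 ≤ (m : ℝ) / c := by rw [le_div_iff₀ hc]; linarith
    linarith [Nat.ceil_lt_add_one (by positivity : 0 ≤ (m : ℝ) / c)]
  have hbound : (m : ℝ) * (2 * ε' * M) ≤ ε * m ^ 2 := by
    calc (m : ℝ) * (2 * ε' * M) ≤ m * (2 * ε' * (2 * (m / c))) := by gcongr
      _ = ε * m ^ 2 := by rw [hε'_def]; field_simp; ring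
  have hs : 2 * k ^ 2 * (4 * (m / c)) ≤ ε' ^ k * #X := by
    calc 2 * k ^ 2 * (4 * (m / c)) = 8 * k ^ 2 * m / c := by ring
      _ ≤ c * ε' ^ k * #X / c := by gcongr
      _ = ε' ^ k * #X := by field_simp
  obtain ⟨A, hAX, B, hBX, hd, hA, hB, h⟩ :=
    exists_disjoint_isSparseTo_or hH hk hε' hε'1 (by positivity) (mod_cast hkX) hs
  have hMA : M ≤ #A := Nat.cast_le.1 (hMle.trans (hA.trans' (by gcongr; norm_num)))
  have hMB : 2 * M ≤ #B := mod_cast (by linarith : 2 * (M : ℝ) ≤ #B)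
  have hrecM : ∀ Y : Finset V, #Y = M → HasFamilyPair (HasFewEdges G (ε * m ^ 2))
      (HasFewEdges Gᶜ (ε * m ^ 2)) (fun A => #A = m) Y D :=
    fun Y hY => hrec Y (hY ▸ (div_le_iff₀' hc).1 hMge)
  rcases h with h | h
  · exact .of_isSparseTo h hAX hBX hd hMA hMB hbound hrecM
  · exact (HasFamilyPair.of_isSparseTo h hAX hBX hd hMA hMB hbound
      fun Y hY => (hrecM Y hY).symm).symm

lemma exists_hasFamilyPair_hasFewEdges {k : ℕ} (hk : 1 ≤ k) (H : SimpleGraph (Fin k))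
    {ε : ℝ} (hε : 0 < ε) (hε1 : ε ≤ 1) (D : ℕ) :
    ∃ c : ℝ, 0 < c ∧ c ≤ 1 ∧ ∀ (V : Type u) (G : SimpleGraph V), ¬ H ⊴ G →
      ∀ (m : ℕ) (X : Finset V), 1 ≤ m → m ≤ c * #X →
      HasFamilyPair (HasFewEdges G (ε * m ^ 2)) (HasFewEdges Gᶜ (ε * m ^ 2)) (fun A => #A = m) X
        D := by
  induction D with
  | zero =>
    refine ⟨1, one_pos, le_rfl, fun V G _ m X hm hX => ?_⟩
    rw [one_mul, Nat.cast_le] at hX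
    obtain ⟨A, hA, hAcard⟩ := exists_subset_card_eq hX
    exact .single hA (card_pos.1 (by lia)) hAcard
  | succ D ih =>
    obtain ⟨c, hc, hc1, ih⟩ := ih
    have hk' : (1 : ℝ) ≤ k := Nat.one_le_cast.2 hk
    have hεc : ε * c ≤ 1 := mul_le_one₀ hε1 hc.le hc1
    refine ⟨c * (ε * c / 4) ^ k / (8 * k ^ 2), by positivity, ?_, fun V G hH m X hm hX => ?_⟩
    · have hpow : c * (ε * c / 4) ^ k ≤ 1 :=
        mul_le_one₀ hc1 (by positivity) (pow_le_one₀ (by positivity) (by linarith))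
      rw [div_le_one (by positivity)]
      nlinarith
    · rw [div_mul_eq_mul_div, le_div_iff₀' (by positivity)] at hX
      exact hasFamilyPair_hasFewEdges_succ hH hk hε hc (by linarith) hc1 hm hX
        fun Y hY => ih V G hH m Y hm hY

lemma hasFewEdges_biUnion_self {F : Finset (Finset V)} {ε : ℝ} {m : ℕ} (hε : 0 ≤ ε)
    (hF : 1 ≤ ε * #F) (hcard : ∀ A ∈ F, #A = m)
    (hedges : (F : Set (Finset V)).Pairwise (HasFewEdges G (ε * m ^ 2))) :
    HasFewEdges G (2 * ε * (#F * m) ^ 2) (F.biUnion id) (F.biUnion id) := by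
  have hrow : ∀ A ∈ F, ∑ B ∈ F, (#(G.interedges A B) : ℝ) ≤ m ^ 2 + #F * (ε * m ^ 2) := by
    intro A hA
    have hdiag : (#(G.interedges A A) : ℝ) ≤ m ^ 2 := by
      have := G.card_interedges_le_mul A A
      rw [hcard A hA, ← sq] at this
      exact_mod_cast this
    have hoff : ∑ B ∈ F.erase A, (#(G.interedges A B) : ℝ) ≤ #F * (ε * m ^ 2) := by
      refine (sum_le_card_nsmul _ _ _ fun B hB => hedges hA (mem_of_mem_erase hB)
        (ne_of_mem_erase hB).symm).trans ?_
      rw [nsmul_eq_mul]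
      gcongr
      exact erase_subset A F
    rw [← add_sum_erase F _ hA]
    exact add_le_add hdiag hoff
  calc (#(G.interedges (F.biUnion id) (F.biUnion id)) : ℝ)
      ≤ ∑ A ∈ F, ∑ B ∈ F, (#(G.interedges A B) : ℝ) := by
        rw [interedges_biUnion]
        refine (Nat.cast_le.2 card_biUnion_le).trans ?_
        rw [sum_product, Nat.cast_sum]
        simp only [Nat.cast_sum, id, le_refl]
    _ ≤ #F * (m ^ 2 + #F * (ε * m ^ 2)) := by
        simpa only [nsmul_eq_mul] using sum_le_card_nsmul F _ _ hrow
    _ ≤ 2 * ε * (#F * m) ^ 2 := by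
        have : (#F : ℝ) * m ^ 2 * 1 ≤ #F * m ^ 2 * (ε * #F) := by gcongr
        linarith

lemma HasFamily.exists_isSparseTo_self {X : Finset V} {ε : ℝ} {m p : ℕ} (hm : 1 ≤ m) (hp : 1 ≤ p)
    (hpε : 1 ≤ ε * p)
    (h : HasFamily (HasFewEdges G (ε * m ^ 2)) (fun A => #A = m) X p) :
    ∃ Y ⊆ X, Y.Nonempty ∧ (m : ℝ) / 2 ≤ #Y ∧ IsSparseTo G (8 * ε) Y Y := by
  obtain ⟨F, rfl, hF, hpair⟩ := h
  have hF1 : (1 : ℝ) ≤ #F := Nat.one_le_cast.2 hp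
  have hm' : (1 : ℝ) ≤ m := Nat.one_le_cast.2 hm
  have hε : 0 ≤ ε := nonneg_of_mul_nonneg_left (zero_le_one.trans hpε) (by linarith)
  set U := F.biUnion id
  have hU : (#U : ℝ) = #F * m := by
    have := card_biUnion (s := F) (t := id) fun A hA B hB hAB => (hpair hA hB hAB).1
    exact_mod_cast this.trans (sum_const_nat fun A hA => (hF A hA).2.2)
  have hedges : HasFewEdges G (#U * (2 * ε * #U)) U U := by
    rw [hU]
    exact (hasFewEdges_biUnion_self hε hpε (fun A hA => (hF A hA).2.2)
      (hpair.mono' fun A B hAB => hAB.2)).trans_eq (by ring)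
  obtain ⟨Y, hYU, hYcard, hY⟩ := exists_subset_forall_card_neighborsIn_le hedges
  have hYcard' : (#U : ℝ) ≤ 2 * #Y := mod_cast hYcard
  have hmY : (m : ℝ) / 2 ≤ #Y := by nlinarith
  refine ⟨Y, hYU.trans (biUnion_subset.2 fun A hA => (hF A hA).1),
    nonempty_of_cast_card_pos (by linarith), hmY, fun v hv => ?_⟩
  calc (#(neighborsIn G v Y) : ℝ) ≤ #(neighborsIn G v U) := card_neighborsIn_mono G v hYU
    _ ≤ 2 * (2 * ε * #U) := hY v hv
    _ = 4 * ε * #U := by ring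
    _ ≤ 4 * ε * (2 * #Y) := by gcongr
    _ = 8 * ε * #Y := by ring

/-- Rödl's theorem. -/
theorem exists_isSparseTo_self_or {k : ℕ} (hk : 1 ≤ k) (H : SimpleGraph (Fin k)) {ε : ℝ}
    (hε : 0 < ε) :
    ∃ δ : ℝ, 0 < δ ∧ δ ≤ 1 ∧ ∀ (V : Type u) (G : SimpleGraph V), ¬ H ⊴ G →
      ∀ X : Finset V, X.Nonempty → ∃ Y ⊆ X, Y.Nonempty ∧ δ * #X ≤ #Y ∧
        (IsSparseTo G ε Y Y ∨ IsSparseTo Gᶜ ε Y Y) := by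
  set ε' := min (ε / 8) 1
  have hε' : 0 < ε' := by positivity
  have hε'ε : 8 * ε' ≤ ε := by linarith [min_le_left (ε / 8) 1]
  obtain ⟨d, hd⟩ : ∃ d : ℕ, 1 ≤ ε' * (2 ^ d : ℕ) := by
    obtain ⟨d, hd⟩ := exists_nat_ge (1 / ε')
    refine ⟨d, (div_le_iff₀' hε').1 (hd.trans ?_)⟩
    exact_mod_cast Nat.lt_two_pow_self.le
  obtain ⟨c, hc, hc1, h⟩ :=
    exists_hasFamilyPair_hasFewEdges.{u} hk H hε' (min_le_right _ _) (2 * d)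
  refine ⟨c / 4, by positivity, by linarith, fun V G hH X hX => ?_⟩
  by_cases hcX : c * #X < 1
  · obtain ⟨x, hx⟩ := hX
    refine ⟨{x}, singleton_subset_iff.2 hx, singleton_nonempty x, ?_,
      .inl (isSparseTo_singleton G hε.le x)⟩
    rw [card_singleton, Nat.cast_one]
    linarith
  set m := ⌊c * #X⌋₊
  have hm : 1 ≤ m := Nat.one_le_floor_iff _ |>.2 (not_lt.1 hcX)
  have hmX : (m : ℝ) ≤ c * #X := Nat.floor_le (by positivity)
  have hXm : c * #X ≤ 2 * m := by
    linarith [Nat.lt_floor_add_one (c * (#X : ℝ)), (Nat.one_le_cast (α := ℝ)).2 hm]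
  rcases (h V G hH m X hm hmX).hasFamily_or_hasFamily with hF | hF
  · obtain ⟨Y, hYX, hne, hmY, hY⟩ := hF.exists_isSparseTo_self hm Nat.one_le_two_pow hd
    exact ⟨Y, hYX, hne, by linarith, .inl (hY.mono hε'ε)⟩
  · obtain ⟨Y, hYX, hne, hmY, hY⟩ := hF.exists_isSparseTo_self hm Nat.one_le_two_pow hd
    exact ⟨Y, hYX, hne, by linarith, .inr (hY.mono hε'ε)⟩

/-! ### Combs -/

/-- A comb with apex `v`: every `u ∈ U` has a neighbour `a u` adjacent to `v`, and the only further
edges between `u`, `a u`, `u'`, `a u'` with `a u ≠ a u'` are those inside `U`. -/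
def IsComb (G : SimpleGraph V) (v : V) (a : V → V) (U : Finset V) : Prop :=
  (∀ u ∈ U, G.Adj (a u) u ∧ G.Adj v (a u) ∧ ¬ G.Adj v u ∧ v ≠ u) ∧
    ∀ u ∈ U, ∀ u' ∈ U, a u ≠ a u' → ¬ G.Adj (a u) u' ∧ ¬ G.Adj (a u) (a u')

section IsComb

variable {v : V} {a : V → V} {U U' : Finset V}

lemma IsComb.mono (h : IsComb G v a U) (hU : U' ⊆ U) : IsComb G v a U' :=
  ⟨fun u hu => h.1 u (hU hu), fun u hu u' hu' => h.2 u (hU hu) u' (hU hu')⟩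

lemma IsComb.exists_isInducedPath (h : IsComb G v a U) {p : ℕ → V} {s : ℕ}
    (hp : IsInducedPath G p s) (hpU : ∀ i ≤ s, p i ∈ U)
    (hpa : ∀ i, 0 < i → i ≤ s → a (p 0) ≠ a (p i)) :
    ∃ q, IsInducedPath G q (s + 2) ∧ q 0 = v ∧ q 1 = a (p 0) ∧ ∀ i, q (i + 2) = p i := by
  obtain ⟨htooth, hcross⟩ := h
  obtain ⟨hp0_adj, hv0, -⟩ := htooth _ (hpU 0 s.zero_le)
  have hap : ∀ i ≤ s, a (p 0) ≠ p i := fun i hi hij => (htooth _ (hpU i hi)).2.2.1 (hij ▸ hv0)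
  have hapadj : ∀ i ≤ s, G.Adj (a (p 0)) (p i) ↔ i = 0 := fun i hi => by
    constructor
    · intro hadj
      by_contra hi0
      exact (hcross _ (hpU 0 s.zero_le) _ (hpU i hi) (hpa i (by omega) hi)).1 hadj
    · rintro rfl
      exact hp0_adj
  obtain ⟨q', hq', hq'0, hq'p⟩ := hp.exists_cons hap hapadj
  have hvq' : ∀ i ≤ s + 1, v ≠ q' i ∧ (G.Adj v (q' i) ↔ i = 0) := by
    rintro (_ | i) hi
    · exact hq'0 ▸ ⟨hv0.ne, iff_of_true hv0 rfl⟩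
    · obtain ⟨-, -, hadj, hne⟩ := htooth _ (hpU i (by omega))
      exact hq'p i ▸ ⟨hne, iff_of_false hadj (by omega)⟩
  obtain ⟨q, hq, hq0, hqq'⟩ :=
    hq'.exists_cons (fun i hi => (hvq' i hi).1) fun i hi => (hvq' i hi).2
  exact ⟨q, hq, hq0, (hqq' 0).trans hq'0, fun i => (hqq' (i + 1)).trans (hq'p i)⟩

/-- The cycle runs from `v` through `a (p 0)` along `p` and returns to `v` through `a (p s)`. -/
lemma IsComb.cycleGraph_isIndContained (h : IsComb G v a U) {p : ℕ → V} {s : ℕ} (hs : 1 ≤ s)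
    (hp : IsInducedPath G p s) (hpU : ∀ i ≤ s, p i ∈ U)
    (hpa : ∀ i j, i < j → j ≤ s → a (p i) ≠ a (p j)) : cycleGraph (s + 4) ⊴ G := by
  obtain ⟨q, hq, hq0, hq1, hqp⟩ := h.exists_isInducedPath hp hpU fun i hi his => hpa 0 i hi his
  obtain ⟨htooth, hcross⟩ := h
  obtain ⟨hps_adj, hvs, hvps, hvps_ne⟩ := htooth _ (hpU s le_rfl)
  have hreturn :
      IsInducedPath G (fun i => if i = 0 then v else if i = 1 then a (p s) else p s) 2 := by
    intro i j hij hj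
    obtain ⟨rfl, rfl⟩ | ⟨rfl, rfl⟩ | ⟨rfl, rfl⟩ :
      (i = 0 ∧ j = 1) ∨ (i = 0 ∧ j = 2) ∨ (i = 1 ∧ j = 2) := by omega
    · simp [hvs, hvs.ne]
    · simp [hvps, hvps_ne]
    · simp [hps_adj, hps_adj.ne]
  have hmeet : ∀ j, 0 < j → j < s + 2 → a (p s) ≠ q j ∧ ¬ G.Adj (a (p s)) (q j) := by
    rintro (_ | _ | j) hj0 hj
    · omega
    · have hne := (hpa 0 s (by omega) le_rfl).symm
      exact hq1 ▸ ⟨hne, (hcross _ (hpU s le_rfl) _ (hpU 0 s.zero_le) hne).2⟩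
    · have hpj := hpU j (by omega)
      exact hqp j ▸ ⟨fun h => (htooth _ hpj).2.2.1 (h ▸ hvs),
        (hcross _ (hpU s le_rfl) _ hpj (hpa j s (by omega) le_rfl).symm).1⟩
  have hcycle := hreturn.cycleGraph_isIndContained hq le_rfl (by omega) hq0
    (by simp [hqp]) fun i j hi hi2 hj hjs => by
      obtain rfl : i = 1 := by omega
      exact hmeet j hj hjs
  rwa [show 2 + (s + 2) = s + 4 by omega] at hcycle

lemma IsComb.cycleGraph_isIndContained_of_noAnticompletePair (h : IsComb G v a U) {θ : ℝ}
    {r : ℕ} (hr : 1 ≤ r) (hna : NoAnticompletePair G U θ) (hθ : 0 < θ)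
    (hdeg : ∀ u ∈ U, (#(neighborsIn G u U) : ℝ) ≤ θ)
    (hfib : ∀ x, (#{u ∈ U | a u = x} : ℝ) ≤ #U / (2 * (r + 1 : ℕ)))
    (hU : 3 ^ (r + 1) * θ ≤ #U / (2 * (r + 1 : ℕ))) : cycleGraph (r + 4) ⊴ G := by
  obtain ⟨g, hg⟩ := exists_grouping (L := r + 1) a (by positivity) hfib (by
    rw [mul_assoc, mul_left_comm, div_mul_cancel₀ _ (by positivity)])
  obtain ⟨p, hp, hp0, hpU, hpg⟩ := hna.exists_transversal_path hθ hdeg (fun u => g (a u))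
    (E := {u ∈ U | g (a u) = 0}) (Y := U) (J := Ioo 0 (r + 1)) (by simp) (filter_subset _ _)
    subset_rfl (fun u hu => by simp [(mem_filter.1 hu).2]) (hU.trans (hg 0 r.succ_pos))
    fun j hj => hU.trans ((hg j (mem_Ioo.1 hj).2).trans_eq (by congr!))
  refine h.cycleGraph_isIndContained hr hp (fun i hi => ?_) fun i j hij hj haij =>
    hpg i j hij hj (congrArg g haij)
  rcases i.eq_zero_or_pos with rfl | hi0
  · exact (mem_filter.1 hp0).1
  · exact (hpU i hi0 hi).1

lemma IsComb.exists_pure_pair_of_sparse (h : IsComb G v a U) {r ℓ : ℕ} (hr : 1 ≤ r) (hℓ : 2 ≤ ℓ)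
    (hGr : ¬ cycleGraph (r + 4) ⊴ G) (hGℓ : ∀ m, ℓ ≤ m → ¬ cycleGraph m ⊴ Gᶜ) {θ : ℝ}
    (hθ : 0 < θ) (hθr : 3 ^ (r + 1) * θ ≤ #U / (2 * (r + 1 : ℕ))) (hθℓ : (3 * ℓ + 11) * θ ≤ #U)
    (hfib : ∀ x, (#{u ∈ U | a u = x} : ℝ) ≤ #U / (2 * (r + 1 : ℕ)))
    (hdeg : (∀ u ∈ U, (#(neighborsIn G u U) : ℝ) + 1 ≤ θ) ∨
      ∀ u ∈ U, (#(neighborsIn Gᶜ u U) : ℝ) + 1 ≤ θ) :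
    ∃ A ⊆ U, ∃ B ⊆ U, Disjoint A B ∧ θ ≤ #A ∧ θ ≤ #B ∧
      (Anticomplete G A B ∨ Anticomplete Gᶜ A B) := by
  by_contra! hcon
  rcases hdeg with hdeg | hdeg
  · have hna : NoAnticompletePair G U θ := fun A hA B hB hd hanti hθA => by
      by_contra! hθB
      exact (hcon A hA B hB hd hθA hθB).1 hanti
    exact hGr (h.cycleGraph_isIndContained_of_noAnticompletePair hr hna hθ
      (fun u hu => by linarith [hdeg u hu]) hfib hθr)
  · have hna : NoAnticompletePair Gᶜ U θ := fun A hA B hB hd hanti hθA => by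
      by_contra! hθB
      exact (hcon A hA B hB hd hθA hθB).2 hanti
    obtain ⟨m, hm, hcycle⟩ := hna.exists_long_cycle hθ hdeg hℓ hθℓ
    exact hGℓ m hm hcycle

end IsComb

lemma IsComb.exists_pure_pair {k ℓ : ℕ} (hk : 5 ≤ k) (hℓ : 2 ≤ ℓ) :
    ∃ c : ℝ, 0 < c ∧ c ≤ 1 / 2 ∧ ∀ (V : Type u) (G : SimpleGraph V),
      ¬ cycleGraph k ⊴ G → (∀ m, ℓ ≤ m → ¬ cycleGraph m ⊴ Gᶜ) →
      ∀ (v : V) (a : V → V) (U : Finset V), IsComb G v a U → U.Nonempty →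
      (∀ x, (#{u ∈ U | a u = x} : ℝ) ≤ c * #U) →
      ∃ A ⊆ U, ∃ B ⊆ U, Disjoint A B ∧ c * #U ≤ #A ∧ c * #U ≤ #B ∧
        (Anticomplete G A B ∨ Anticomplete Gᶜ A B) := by
  obtain ⟨r, rfl⟩ := Nat.exists_eq_add_of_le' (by omega : 4 ≤ k)
  obtain ⟨θ, hθ, hθℓ, hθr⟩ :
      ∃ θ : ℝ, 0 < θ ∧ θ ≤ 1 / (3 * ℓ + 11) ∧ θ ≤ 1 / (3 ^ (r + 1) * (2 * (r + 1 : ℕ))) :=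
    ⟨_, lt_min (by positivity) (by positivity), min_le_left _ _, min_le_right _ _⟩
  rw [le_div_iff₀ (by positivity)] at hθℓ hθr
  obtain ⟨δ, hδ, hδ1, hRödl⟩ := exists_isSparseTo_self_or.{u} (by omega : 1 ≤ r + 4)
    (cycleGraph (r + 4)) (by positivity : 0 < θ / 2)
  obtain ⟨c, hc, hcθ, hcr⟩ : ∃ c : ℝ, 0 < c ∧ c ≤ θ * δ / 2 ∧ c ≤ δ / (2 * (r + 1 : ℕ)) :=
    ⟨_, lt_min (by positivity) (by positivity), min_le_left _ _, min_le_right _ _⟩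
  have hθδ : θ * δ ≤ 1 := mul_le_one₀ (by nlinarith) hδ.le hδ1
  refine ⟨c, hc, by linarith, fun V G hGk hGℓ v a U hcomb hne hfib => ?_⟩
  obtain ⟨Y, hYU, hYne, hYcard, hY⟩ := hRödl V G hGk U hne
  have : (0 : ℝ) < #Y := mod_cast hYne.card_pos
  have hcU : 1 ≤ c * #U := by
    obtain ⟨u, hu⟩ := hne
    exact (hfib (a u)).trans' (Nat.one_le_cast.2 (card_pos.2 ⟨u, mem_filter.2 ⟨hu, rfl⟩⟩))
  have hcY : c * #U ≤ θ * #Y / 2 := by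
    calc c * #U ≤ θ * δ / 2 * #U := by gcongr
      _ = θ * (δ * #U) / 2 := by ring
      _ ≤ θ * #Y / 2 := by gcongr
  have hfibY : ∀ x, (#{u ∈ Y | a u = x} : ℝ) ≤ #Y / (2 * (r + 1 : ℕ)) := fun x => by
    calc (#{u ∈ Y | a u = x} : ℝ) ≤ #{u ∈ U | a u = x} := by gcongr
      _ ≤ δ / (2 * (r + 1 : ℕ)) * #U := (hfib x).trans (by gcongr)
      _ = δ * #U / (2 * (r + 1 : ℕ)) := by ring
      _ ≤ #Y / (2 * (r + 1 : ℕ)) := by gcongr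
  obtain ⟨A, hA, B, hB, hd, hθA, hθB, hAB⟩ :=
    (hcomb.mono hYU).exists_pure_pair_of_sparse (θ := θ * #Y) (by omega) hℓ hGk hGℓ (by positivity)
      (by rw [le_div_iff₀ (by positivity)]; nlinarith) (by nlinarith) hfibY
      (hY.imp (fun h u hu => by linarith [h u hu]) fun h u hu => by linarith [h u hu])
  exact ⟨A, hA.trans hYU, B, hB.trans hYU, hd, by linarith, by linarith, hAB⟩

lemma IsComb.exists_hasFamilyPair {k ℓ : ℕ} (hk : 5 ≤ k) (hℓ : 2 ≤ ℓ) :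
    ∃ c : ℝ, 0 < c ∧ c ≤ 1 / 2 ∧ ∀ (V : Type u) (G : SimpleGraph V),
      ¬ cycleGraph k ⊴ G → (∀ m, ℓ ≤ m → ¬ cycleGraph m ⊴ Gᶜ) →
      ∀ (v : V) (a : V → V) (b : ℝ), 0 < b → ∀ (D : ℕ) (U : Finset V), IsComb G v a U →
      (∀ x, (#{u ∈ U | a u = x} : ℝ) ≤ b) → b ≤ c ^ (D + 1) * #U →
      HasFamilyPair (Anticomplete G) (Anticomplete Gᶜ) (fun A => b ≤ #A) U D := by
  obtain ⟨c, hc, hc2, hpure⟩ := IsComb.exists_pure_pair.{u} hk hℓ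
  refine ⟨c, hc, hc2, fun V G hGk hGℓ v a b hb D => ?_⟩
  have hnonempty : ∀ {D : ℕ} {U : Finset V}, b ≤ c ^ (D + 1) * #U → U.Nonempty := fun hbU =>
    nonempty_of_cast_card_pos (pos_of_mul_pos_right (hb.trans_le hbU) (by positivity))
  have hle : ∀ {D : ℕ} {U : Finset V}, b ≤ c ^ (D + 1) * #U → b ≤ c * #U := fun hbU =>
    hbU.trans (by gcongr; exact pow_le_of_le_one hc.le (by linarith) (Nat.succ_ne_zero _))
  induction D with
  | zero =>
    intro U _ _ hbU
    exact .single subset_rfl (hnonempty hbU)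
      ((hle hbU).trans (mul_le_of_le_one_left (by positivity) (by linarith)))
  | succ D ih =>
    intro U hU hfib hbU
    obtain ⟨A, hA, B, hB, hd, hAcard, hBcard, hAB⟩ := hpure V G hGk hGℓ v a U hU (hnonempty hbU)
      fun x => (hfib x).trans (hle hbU)
    have hrec : ∀ W ⊆ U, c * #U ≤ #W →
        HasFamilyPair (Anticomplete G) (Anticomplete Gᶜ) (fun A => b ≤ #A) W D := by
      intro W hW hWcard
      refine ih W (hU.mono hW) (fun x => (hfib x).trans' (by gcongr)) (hbU.trans ?_)
      rw [pow_succ, mul_assoc]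
      gcongr
    have hAA := hrec A hA hAcard
    have hBB := hrec B hB hBcard
    rcases hAB with hAB | hAB
    · exact hAA.merge hBB hA hB hd
        fun A' hA' B' hB' _ _ => ⟨hAB.mono hA' hB', (hAB.mono hA' hB').symm⟩
    · exact (hAA.symm.merge hBB.symm hA hB hd
        fun A' hA' B' hB' _ _ => ⟨hAB.mono hA' hB', (hAB.mono hA' hB').symm⟩).symm

/-! ### Sparse critical sets -/

lemma exists_isComb_of_privateNeighbors {v : V} {T B : Finset V} {b : ℕ}
    (hT : Anticomplete G T T) (hvT : ∀ x ∈ T, G.Adj v x) (hvB : ∀ u ∈ B, ¬ G.Adj v u ∧ v ≠ u)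
    (hb : ∀ x ∈ T, b ≤ #(privateNeighbors G T x B)) :
    ∃ (a : V → V) (U : Finset V), U ⊆ B ∧ IsComb G v a U ∧ #U = #T * b ∧
      ∀ x, #{u ∈ U | a u = x} ≤ b := by
  have : Nonempty V := ⟨v⟩
  choose! P hP hPcard using fun x hx => exists_subset_card_eq (hb x hx)
  choose! a haT haP using fun u (hu : u ∈ T.biUnion P) => mem_biUnion.1 hu
  have hpriv : ∀ u ∈ T.biUnion P, u ∈ B ∧ G.Adj (a u) u ∧ ∀ x ∈ T, G.Adj x u → x = a u :=
    fun u hu => mem_privateNeighbors.1 (hP _ (haT u hu) (haP u hu))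
  have haeq : ∀ x ∈ T, ∀ u ∈ P x, a u = x := fun x hx u hu =>
    ((hpriv u (mem_biUnion.2 ⟨x, hx, hu⟩)).2.2 x hx
      (mem_privateNeighbors.1 (hP x hx hu)).2.1).symm
  refine ⟨a, T.biUnion P, fun u hu => (hpriv u hu).1, ⟨fun u hu => ?_, ?_⟩, ?_, fun x => ?_⟩
  · obtain ⟨huB, hau, -⟩ := hpriv u hu
    exact ⟨hau, hvT _ (haT u hu), hvB u huB⟩
  · intro u hu u' hu' hne
    exact ⟨fun hadj => hne ((hpriv u' hu').2.2 _ (haT u hu) hadj),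
      hT _ (haT u hu) _ (haT u' hu')⟩
  · rw [card_biUnion, sum_congr rfl hPcard, sum_const, smul_eq_mul]
    intro x hx y hy hxy
    exact Finset.disjoint_left.2 fun u hu hu' => hxy ((haeq x hx u hu).symm.trans (haeq y hy u hu'))
  · rcases ({u ∈ T.biUnion P | a u = x}).eq_empty_or_nonempty with hemp | ⟨u, hu⟩
    · simp [hemp]
    · obtain ⟨huU, rfl⟩ := mem_filter.1 hu
      rw [← hPcard _ (haT u huU)]
      refine card_le_card fun w hw => ?_
      obtain ⟨hw, haw⟩ := mem_filter.1 hw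
      exact haw ▸ haP w hw

section IsCritical

variable {X : Finset V} {τ : ℝ}

lemma IsCritical.rpow_add_rpow_le_one (hX : IsCritical G τ X) (hne : X.Nonempty)
    {A R S : Finset V} (hAX : A ⊆ X) (hRX : R ⊆ X) (hSX : S ⊆ X) (hS : Anticomplete G S S)
    (hScard : #S = alphaOn G A) (hd : Disjoint S R) (hSR : Anticomplete G S R) :
    ((#A : ℝ) / #X) ^ τ + ((#R : ℝ) / #X) ^ τ ≤ 1 := by
  have hα : (0 : ℝ) < alphaOn G X := mod_cast alphaOn_pos G hne
  have hsum : (alphaOn G A : ℝ) + alphaOn G R ≤ alphaOn G X := by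
    have hSα := card_le_alphaOn subset_rfl hS
    have hunion := alphaOn_add_le_alphaOn_union hd hSR
    have hmono := alphaOn_mono G (union_subset hSX hRX)
    exact_mod_cast (by omega : alphaOn G A + alphaOn G R ≤ alphaOn G X)
  have hA := hX.alphaOn_le hne hAX
  have hR := hX.alphaOn_le hne hRX
  exact le_of_mul_le_mul_left (by linarith) hα

/-- The set `S` is a maximum stable set of neighbours of `v`. -/
lemma IsCritical.exists_dominating (hτ : τ ≤ 1) (hX : IsCritical G τ X) {v : V} (hv : v ∈ X) :
    ∃ S ⊆ neighborsIn G v X, Anticomplete G S S ∧ ∃ B ⊆ X, (∀ b ∈ B, ∃ a ∈ S, G.Adj a b) ∧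
      (∀ u ∈ B, ¬ G.Adj v u ∧ v ≠ u) ∧
      (#X : ℝ) * ((#(neighborsIn G v X) : ℝ) / #X) ^ τ ≤ #B + #(neighborsIn G v X) + 1 := by
  have hn : (0 : ℝ) < #X := mod_cast card_pos.2 ⟨v, hv⟩
  set A := neighborsIn G v X with hA
  have hAX : A ⊆ X := neighborsIn_subset G v X
  obtain ⟨S, hSA, hS, hScard⟩ := exists_card_eq_alphaOn G A
  set R := (X \ covered G S X) \ S with hR
  set B := covered G S X \ insert v A with hB
  have hRX : R ⊆ X := sdiff_subset.trans sdiff_subset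
  have hBX : B ⊆ X := sdiff_subset.trans (covered_subset G S X)
  refine ⟨S, hSA, hS, B, hBX, fun b hb => (mem_covered.1 (mem_sdiff.1 hb).1).2, ?_, ?_⟩
  · intro u hu
    have huA := (mem_sdiff.1 hu).2
    rw [mem_insert, hA, mem_neighborsIn] at huA
    push Not at huA
    exact ⟨huA.2 (hBX hu), huA.1.symm⟩
  · have hle := hX.rpow_add_rpow_le_one ⟨v, hv⟩ hAX hRX (hSA.trans hAX) hS hScard disjoint_sdiff
      ((anticomplete_sdiff_covered G S X).mono subset_rfl sdiff_subset)
    have hRτ : (#R : ℝ) / #X ≤ ((#R : ℝ) / #X) ^ τ := by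
      refine Real.self_le_rpow_of_le_one (by positivity) ?_ hτ
      exact div_le_one_of_le₀ (mod_cast card_le_card hRX) hn.le
    have hcover : X ⊆ R ∪ (B ∪ insert v A) := fun x hx => by
      have hSx : x ∈ S → x ∈ A := fun h => hSA h
      simp only [hR, hB, mem_union, mem_sdiff, mem_insert]
      tauto
    have hcard : (#X : ℝ) ≤ #R + (#B + (#A + 1)) := by
      exact_mod_cast (card_le_card hcover).trans ((card_union_le _ _).trans (Nat.add_le_add_left
        ((card_union_le _ _).trans (Nat.add_le_add_left (card_insert_le _ _) _)) _))
    have hRcard : (#R : ℝ) ≤ (1 - ((#A : ℝ) / #X) ^ τ) * #X :=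
      (div_le_iff₀ hn).1 (by linarith)
    linarith

lemma IsCritical.not_anticomplete_self (hX : IsCritical G τ X) (hτ : τ < 1) (hX2 : 2 ≤ #X) :
    ¬ Anticomplete G X X := by
  intro hstable
  obtain ⟨v, hv⟩ : X.Nonempty := card_pos.1 (by omega)
  have hn : (1 : ℝ) < #X := mod_cast hX2
  have hα : (#X : ℝ) ≤ alphaOn G X := mod_cast card_le_alphaOn subset_rfl hstable
  have hα1 : (alphaOn G {v} : ℝ) ≤ 1 := by
    obtain ⟨S, hS, -, hScard⟩ := exists_card_eq_alphaOn G {v}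
    exact_mod_cast hScard ▸ card_le_card hS
  have hcrit := hX.alphaOn_le ⟨v, hv⟩ (singleton_subset_iff.2 hv)
  rw [card_singleton, Nat.cast_one, Real.div_rpow zero_le_one (by positivity), Real.one_rpow,
    mul_one_div, div_le_iff₀ (by positivity)] at hcrit
  have hlt := Real.rpow_lt_rpow_of_exponent_lt hn hτ
  rw [Real.rpow_one] at hlt
  exact (hα.trans hcrit).not_gt
    ((mul_le_of_le_one_left (by positivity) hα1).trans_lt hlt)

/-- In terms of `z = (Δ / n) ^ (1 / 4)` the claim is `100 * z ^ 2 + 2 * z ^ 4 < z`. -/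
lemma hundred_mul_sqrt_add_lt_mul_rpow {n Δ : ℝ} (hn : 0 < n) (hΔ : 0 < Δ)
    (hΔn : Δ ≤ 1 / 103 ^ 4 * n) (hτ : τ ≤ 1 / 4) :
    100 * √(n * Δ) + 2 * Δ < n * (Δ / n) ^ τ := by
  obtain ⟨y, hy⟩ : ∃ y, y = Δ / n := ⟨_, rfl⟩
  obtain ⟨z, hz⟩ : ∃ z, z = y ^ (1 / 4 : ℝ) := ⟨_, rfl⟩
  have hy0 : 0 < y := hy ▸ div_pos hΔ hn
  have hy1 : y ≤ 1 / 103 ^ 4 := hy ▸ (div_le_iff₀ hn).2 hΔn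
  have hz0 : 0 < z := hz ▸ Real.rpow_pos_of_pos hy0 _
  have hz4 : z ^ 4 = y := by
    rw [hz, ← Real.rpow_natCast, ← Real.rpow_mul hy0.le]
    norm_num
  have hz1 : z ≤ 1 / 103 := by
    rw [← pow_le_pow_iff_left₀ hz0.le (by norm_num) four_ne_zero, hz4]
    exact hy1.trans_eq (by norm_num)
  have hzτ : z ≤ y ^ τ :=
    hz ▸ Real.rpow_le_rpow_of_exponent_ge hy0 (hy1.trans (by norm_num)) hτ
  have hΔz : Δ = n * z ^ 4 := by rw [hz4, hy, mul_div_cancel₀ _ hn.ne']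
  have hsqrt : √(n * Δ) = n * z ^ 2 := by
    rw [hΔz, show n * (n * z ^ 4) = (n * z ^ 2) ^ 2 by ring, Real.sqrt_sq (by positivity)]
  have hz42 : z ^ 4 ≤ z ^ 2 := pow_le_pow_of_le_one hz0.le (by linarith) (by norm_num)
  calc 100 * √(n * Δ) + 2 * Δ = n * (100 * z ^ 2 + 2 * z ^ 4) := by rw [hsqrt, hΔz]; ring
    _ < n * z := by gcongr; nlinarith
    _ ≤ n * (Δ / n) ^ τ := by rw [← hy]; gcongr

lemma IsCritical.exists_isComb (hτ : τ ≤ 1 / 4) (hX : IsCritical G τ X) (hX2 : 2 ≤ #X) {y₀ : ℝ}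
    (hy₀ : y₀ ≤ 1 / 103 ^ 4) (hdeg : ∀ v ∈ X, (#(neighborsIn G v X) : ℝ) ≤ y₀ * #X) :
    ∃ (v : V) (a : V → V) (U : Finset V) (t b : ℕ), U ⊆ X ∧ IsComb G v a U ∧ #U = t * b ∧
      (∀ x, #{u ∈ U | a u = x} ≤ b) ∧ 0 < t ∧ 1 ≤ y₀ * (t : ℝ) ^ 2 ∧
      (#X : ℝ) ≤ b * (t : ℝ) ^ 2 := by
  have hne : X.Nonempty := card_pos.1 (by omega)
  have hn : (0 : ℝ) < #X := mod_cast hne.card_pos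
  obtain ⟨v, hv, hmax⟩ := exists_max_image X (fun v => (#(neighborsIn G v X) : ℝ)) hne
  have hΔ : (1 : ℝ) ≤ #(neighborsIn G v X) := by
    have hedge := hX.not_anticomplete_self (by linarith) hX2
    simp only [Anticomplete, not_forall, not_not] at hedge
    obtain ⟨x, hx, y, hy, hxy⟩ := hedge
    refine le_trans ?_ (hmax x hx)
    exact_mod_cast card_pos.2 ⟨y, mem_neighborsIn.2 ⟨hy, hxy⟩⟩
  obtain ⟨S, hSA, hS, B, hBX, hcov, hvB, hBcard⟩ := hX.exists_dominating (by linarith) hv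
  have hSX : S ⊆ X := hSA.trans (neighborsIn_subset G v X)
  have hlt := hundred_mul_sqrt_add_lt_mul_rpow hn (by linarith)
    ((hdeg v hv).trans (by gcongr)) hτ
  obtain ⟨T, hTS, hTne, hT⟩ := (exists_subset_privateNeighbors_or_card_le G hn.le hcov fun x hx =>
    (card_neighborsIn_mono G x hBX).trans (hmax x (hSX hx))).resolve_right (by linarith)
  have ht : (0 : ℝ) < #T := mod_cast hTne.card_pos
  obtain ⟨a, U, hUB, hU, hUcard, hfib⟩ := exists_isComb_of_privateNeighbors
    (b := ⌈(#X : ℝ) / (#T : ℝ) ^ 2⌉₊) (hS.mono hTS hTS)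
    (fun x hx => (mem_neighborsIn.1 (hSA (hTS hx))).2) hvB
    fun x hx => Nat.ceil_le.2 ((div_le_iff₀ (by positivity)).2 (hT x hx))
  refine ⟨v, a, U, #T, _, hUB.trans hBX, hU, hUcard, hfib, hTne.card_pos, ?_,
    (div_le_iff₀ (by positivity)).1 (Nat.le_ceil _)⟩
  obtain ⟨x, hx⟩ := hTne
  have hpriv : (#(privateNeighbors G T x B) : ℝ) ≤ #(neighborsIn G x X) :=
    (Nat.cast_le.2 (card_le_card (privateNeighbors_subset_neighborsIn G T x B))).trans
      (card_neighborsIn_mono G x hBX)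
  refine le_of_mul_le_mul_left ?_ hn
  calc (#X : ℝ) * 1 ≤ #(privateNeighbors G T x B) * (#T : ℝ) ^ 2 := by linarith [hT x hx]
    _ ≤ y₀ * #X * (#T : ℝ) ^ 2 := by
      gcongr
      exact hpriv.trans (hdeg x (hSX (hTS hx)))
    _ = #X * (y₀ * (#T : ℝ) ^ 2) := by ring

end IsCritical

lemma exists_pow_mul_lt_one_and_one_le {c t : ℝ} (hc : 0 < c) (hc1 : c < 1) (ht : 1 ≤ c ^ 3 * t) :
    ∃ d : ℕ, 1 ≤ d ∧ c ^ (2 * d + 3) * t < 1 ∧ 1 ≤ c ^ (2 * d + 1) * t := by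
  have ht0 : 0 < t := pos_of_mul_pos_right (by linarith) (by positivity : 0 ≤ c ^ 3)
  have hex : ∃ d : ℕ, c ^ (2 * d + 3) * t < 1 := by
    obtain ⟨d, hd⟩ := exists_pow_lt_of_lt_one (by positivity : 0 < 1 / t) hc1
    refine ⟨d, lt_of_le_of_lt ?_ ((lt_div_iff₀ ht0).1 hd)⟩
    gcongr ?_ * _
    exact pow_le_pow_of_le_one hc.le hc1.le (by omega)
  have hd : 1 ≤ Nat.find hex := by
    rw [Nat.one_le_iff_ne_zero, Ne, Nat.find_eq_zero]
    simpa using ht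
  refine ⟨_, hd, Nat.find_spec hex, ?_⟩
  have hmin := not_lt.1 (Nat.find_min hex (m := Nat.find hex - 1) (by omega))
  rwa [show 2 * (Nat.find hex - 1) + 3 = 2 * Nat.find hex + 1 by omega] at hmin

lemma one_lt_two_pow_mul_rpow {c t b n : ℝ} {N d : ℕ} (hN : 1 ≤ N) (hd : 1 ≤ d) (hc : 0 < c)
    (hcN : 1 ≤ c * 2 ^ N) (ht : 0 < t) (hct : c ^ (2 * d + 3) * t < 1) (hn : 0 < n)
    (hnb : n ≤ b * t ^ 2) : 1 < 2 ^ d * (b / n) ^ (1 / (10 * N) : ℝ) := by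
  have ht_lt : t < 2 ^ (N * (2 * d + 3)) := by
    have hone : 1 ≤ c ^ (2 * d + 3) * 2 ^ (N * (2 * d + 3)) := by
      rw [pow_mul, ← mul_pow]
      exact one_le_pow₀ hcN
    exact lt_of_mul_lt_mul_left (hct.trans_le hone) (by positivity)
  have hbn : (1 / 2 : ℝ) ^ (2 * N * (2 * d + 3)) < b / n := by
    calc (1 / 2 : ℝ) ^ (2 * N * (2 * d + 3)) = 1 / (2 ^ (N * (2 * d + 3))) ^ 2 := by
          rw [one_div_pow]; ring
      _ < 1 / t ^ 2 := by gcongr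
      _ ≤ b / n := by
          rw [div_le_div_iff₀ (by positivity) hn]
          linarith
  have hexp : ((2 * N * (2 * d + 3) : ℕ) : ℝ) * (1 / (10 * N)) ≤ d := by
    have hd' : (1 : ℝ) ≤ d := mod_cast hd
    push_cast
    rw [mul_one_div, div_le_iff₀ (by positivity)]
    nlinarith [(Nat.cast_nonneg N : (0 : ℝ) ≤ N)]
  calc (1 : ℝ) = 2 ^ d * (1 / 2) ^ d := by rw [← mul_pow]; norm_num
    _ ≤ 2 ^ d * ((1 / 2 : ℝ) ^ (2 * N * (2 * d + 3))) ^ (1 / (10 * N) : ℝ) := by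
      gcongr
      rw [← Real.rpow_natCast, ← Real.rpow_natCast, ← Real.rpow_mul (by norm_num)]
      exact Real.rpow_le_rpow_of_exponent_ge (by norm_num) (by norm_num) hexp
    _ < 2 ^ d * (b / n) ^ (1 / (10 * N) : ℝ) := by gcongr

/-- A sparse critical set would contain a comb, hence a family of `2 ^ d` pairwise anticomplete (or
pairwise complete) sets that is too large for criticality. -/
lemma exists_forall_not_isCritical_of_sparse {k ℓ : ℕ} (hk : 5 ≤ k) (hℓ : 2 ≤ ℓ) :
    ∃ σ y : ℝ, 0 < σ ∧ σ ≤ 1 ∧ 0 < y ∧ ∀ (V : Type u) (G : SimpleGraph V),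
      ¬ cycleGraph k ⊴ G → (∀ m, ℓ ≤ m → ¬ cycleGraph m ⊴ Gᶜ) → ∀ X : Finset V, 2 ≤ #X →
      (∀ v ∈ X, (#(neighborsIn G v X) : ℝ) ≤ y * #X) → ¬ IsCritical G σ X := by
  obtain ⟨c, hc, hc1, hcomb⟩ := IsComb.exists_hasFamilyPair.{u} hk hℓ
  obtain ⟨N, hcN⟩ := exists_pow_lt_of_lt_one hc (by norm_num : (1 / 2 : ℝ) < 1)
  have hN : 1 ≤ N := by
    rw [Nat.one_le_iff_ne_zero]
    rintro rfl
    linarith [pow_zero (1 / 2 : ℝ)]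
  have hN' : (1 : ℝ) ≤ N := mod_cast hN
  rw [one_div_pow, div_lt_iff₀ (by positivity)] at hcN
  have hσ : (1 : ℝ) / (10 * N) ≤ 1 / 4 := one_div_le_one_div_of_le (by norm_num) (by linarith)
  refine ⟨1 / (10 * N), min (1 / 103 ^ 4) (c ^ 6), by positivity, by linarith,
    lt_min (by norm_num) (by positivity), fun V G hGk hGℓ X hX2 hdeg hX => ?_⟩
  obtain ⟨v, a, U, t, b, hUX, hU, hUcard, hfib, ht, hyt, hnb⟩ :=
    hX.exists_isComb hσ hX2 (min_le_left _ _) hdeg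
  have hne : X.Nonempty := card_pos.1 (by omega)
  have hn : (0 : ℝ) < #X := mod_cast hne.card_pos
  have ht0 : (0 : ℝ) < t := mod_cast ht
  have hb0 : (0 : ℝ) < b := pos_of_mul_pos_left (hn.trans_le hnb) (by positivity)
  have hc3t : 1 ≤ c ^ 3 * t := by
    refine (one_le_sq_iff₀ (by positivity)).1 (hyt.trans ?_)
    rw [mul_pow, ← pow_mul]
    gcongr
    exact min_le_right _ _
  obtain ⟨d, hd, hlt, hge⟩ := exists_pow_mul_lt_one_and_one_le hc (by linarith) hc3t
  have hpair := hcomb V G hGk hGℓ v a b hb0 (2 * d) U hU (fun x => mod_cast hfib x) (by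
    rw [hUcard, Nat.cast_mul, ← mul_assoc]
    exact le_mul_of_one_le_left hb0.le hge)
  have hfam : ((2 ^ d : ℕ) : ℝ) * ((b : ℝ) / #X) ^ (1 / (10 * N) : ℝ) ≤ 1 := by
    rcases hpair.hasFamily_or_hasFamily with h | h
    · exact hX.mul_rpow_le_one (by positivity) hne hb0.le
        (h.mono hUX (fun _ _ h => h) fun _ _ _ _ _ _ h => h)
    · exact hX.compl.mul_rpow_le_one (by positivity) hne hb0.le
        (h.mono hUX (fun _ _ h => h) fun _ _ _ _ _ _ h => h)
  rw [Nat.cast_pow, Nat.cast_ofNat] at hfam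
  exact hfam.not_gt (one_lt_two_pow_mul_rpow hN hd hc hcN.le ht0 hlt hn hnb)

/-! ### Cycles of length at least five -/

section IsCritical

variable {X : Finset V} {τ : ℝ}

lemma exists_isCritical_subset_of_kappaOn_lt (hτ : 0 < τ) (hX : X.Nonempty)
    (h : (kappaOn G X : ℝ) < (#X : ℝ) ^ τ) :
    ∃ Y ⊆ X, 2 ≤ #Y ∧ IsCritical G τ Y ∧ 2 < (#Y : ℝ) ^ τ := by
  obtain ⟨Y, hYX, hYne, hY, hκ⟩ := exists_isCritical_subset G hτ hX
  have hx : (0 : ℝ) < #X := mod_cast hX.card_pos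
  have : (0 : ℝ) < #Y := mod_cast hYne.card_pos
  have hlt : (kappaOn G Y : ℝ) < (#Y : ℝ) ^ τ := by
    refine lt_of_mul_lt_mul_right (hκ.trans_lt ?_) (Real.rpow_nonneg hx.le τ)
    rw [mul_comm ((#Y : ℝ) ^ τ)]
    gcongr
  have hY2 : 2 ≤ #Y := by
    by_contra! hY1
    have hκ1 : (1 : ℝ) ≤ kappaOn G Y := mod_cast kappaOn_pos G hYne
    rw [show #Y = 1 by have := hYne.card_pos; omega, Nat.cast_one, Real.one_rpow] at hlt
    exact hκ1.not_gt hlt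
  exact ⟨Y, hYX, hY2, hY, lt_of_le_of_lt (mod_cast two_le_kappaOn G hY2) hlt⟩

lemma IsCritical.noAnticompletePair (hX : IsCritical G τ X) (hτ : 0 < τ) {θ : ℝ} (hθ : 0 < θ)
    (h : 1 / 2 < (θ / #X) ^ τ) : NoAnticompletePair G X θ := by
  intro A hA B hB hd hanti hθA
  by_contra! hθB
  have hAne := nonempty_of_cast_card_pos (hθ.trans_le hθA)
  have hBne := nonempty_of_cast_card_pos (hθ.trans_le hθB)
  have hfam : HasFamily (Anticomplete G) (fun A => θ ≤ #A) X (1 + 1) :=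
    (HasFamily.single subset_rfl hAne hθA).merge (.single subset_rfl hBne hθB) hA hB hd
      fun A' hA' B' hB' _ _ => ⟨hanti.mono hA' hB', (hanti.mono hA' hB').symm⟩
  have hle := hX.mul_rpow_le_one hτ (hAne.mono hA) hθ.le hfam
  push_cast at hle
  linarith

lemma IsCritical.card_pow_succ_le (hX : IsCritical G τ X) (hτ : 0 < τ) {Y Z : Finset V} {Q : ℕ}
    (hYX : Y ⊆ X) (hZY : Z ⊆ Y) (hZ : Z.Nonempty)
    (hκ : (kappaOn G Z : ℝ) * (#Y : ℝ) ^ ((Q + 1 : ℕ) * τ) ≤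
      kappaOn G Y * (#Z : ℝ) ^ ((Q + 1 : ℕ) * τ)) :
    (#Y : ℝ) ^ (Q + 1) ≤ #X * (#Z : ℝ) ^ Q := by
  have hz : (0 : ℝ) < #Z := mod_cast hZ.card_pos
  have hκZ : (0 : ℝ) < kappaOn G Z := mod_cast kappaOn_pos G hZ
  have hκX : (0 : ℝ) < kappaOn G X := mod_cast kappaOn_pos G (hZ.mono (hZY.trans hYX))
  have hκYX : (kappaOn G Y : ℝ) ≤ kappaOn G X := mod_cast kappaOn_mono G hYX
  rw [Real.rpow_natCast_mul (by positivity), Real.rpow_natCast_mul hz.le] at hκ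
  have hrpow : (#Z * (#Y : ℝ) ^ (Q + 1)) ^ τ ≤ (#X * (#Z : ℝ) ^ (Q + 1)) ^ τ := by
    rw [Real.mul_rpow hz.le (by positivity), Real.mul_rpow (by positivity) (by positivity)]
    refine le_of_mul_le_mul_left ?_ (mul_pos hκX hκZ)
    calc (kappaOn G X : ℝ) * kappaOn G Z * ((#Z : ℝ) ^ τ * ((#Y : ℝ) ^ (Q + 1)) ^ τ)
        = (kappaOn G X * (#Z : ℝ) ^ τ) * (kappaOn G Z * ((#Y : ℝ) ^ (Q + 1)) ^ τ) := by ring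
      _ ≤ (kappaOn G Z * (#X : ℝ) ^ τ) * (kappaOn G X * ((#Z : ℝ) ^ (Q + 1)) ^ τ) :=
        mul_le_mul (hX Z (hZY.trans hYX)) (hκ.trans (by gcongr)) (by positivity) (by positivity)
      _ = kappaOn G X * kappaOn G Z * ((#X : ℝ) ^ τ * ((#Z : ℝ) ^ (Q + 1)) ^ τ) := by ring
  refine le_of_mul_le_mul_left ?_ hz
  calc #Z * (#Y : ℝ) ^ (Q + 1) ≤ #X * (#Z : ℝ) ^ (Q + 1) :=
        (Real.rpow_le_rpow_iff (by positivity) (by positivity) hτ).1 hrpow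
    _ = #Z * (#X * (#Z : ℝ) ^ Q) := by ring

lemma IsCritical.card_le_two_mul (hX : IsCritical G τ X) (hτ : 0 < τ) {Y Z : Finset V} {δ : ℝ}
    {Q : ℕ} (hYX : Y ⊆ X) (hZY : Z ⊆ Y) (hZ : Z.Nonempty) (hY : δ * #X ≤ #Y)
    (hδ : (1 / 2 : ℝ) ^ Q < δ) (hκ : (kappaOn G Z : ℝ) * (#Y : ℝ) ^ ((Q + 1 : ℕ) * τ) ≤
      kappaOn G Y * (#Z : ℝ) ^ ((Q + 1 : ℕ) * τ)) : (#Y : ℝ) ≤ 2 * #Z := by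
  have hy : (0 : ℝ) < #Y := mod_cast (hZ.mono hZY).card_pos
  have hx : (0 : ℝ) < #X := mod_cast (hZ.mono (hZY.trans hYX)).card_pos
  by_contra! hlt
  have hle : (#Y : ℝ) ^ Q * #Y ≤ (#Y : ℝ) ^ Q * ((1 / 2) ^ Q * #X) := by
    calc (#Y : ℝ) ^ Q * #Y ≤ #X * (#Z : ℝ) ^ Q := by
          rw [← pow_succ]
          exact hX.card_pow_succ_le hτ hYX hZY hZ hκ
      _ ≤ #X * (1 / 2 * #Y) ^ Q := by
        gcongr
        linarith
      _ = (#Y : ℝ) ^ Q * ((1 / 2) ^ Q * #X) := by rw [mul_pow]; ring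
  have hYX' := le_of_mul_le_mul_left hle (by positivity)
  have hδX : (1 / 2 : ℝ) ^ Q * #X < δ * #X := by gcongr
  linarith

lemma IsCritical.exists_isCritical_of_isSparseTo (hX : IsCritical G τ X) (hτ : 0 < τ)
    {Y : Finset V} {δ ε : ℝ} {Q : ℕ} (hYX : Y ⊆ X) (hYne : Y.Nonempty) (hYcard : δ * #X ≤ #Y)
    (hδ : (1 / 2 : ℝ) ^ Q < δ) (hε : 0 ≤ ε) (hY : IsSparseTo G ε Y Y) :
    ∃ Z : Finset V, (#Y : ℝ) ≤ 2 * #Z ∧ IsCritical G ((Q + 1 : ℕ) * τ) Z ∧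
      IsSparseTo G (2 * ε) Z Z := by
  obtain ⟨Z, hZY, hZne, hZ, hκ⟩ :=
    exists_isCritical_subset G (by positivity : 0 < (Q + 1 : ℕ) * τ) hYne
  have hYZ := hX.card_le_two_mul hτ hYX hZY hZne hYcard hδ hκ
  refine ⟨Z, hYZ, hZ, fun v hv => ?_⟩
  calc (#(neighborsIn G v Z) : ℝ) ≤ #(neighborsIn G v Y) := card_neighborsIn_mono G v hZY
    _ ≤ ε * #Y := hY v (hZY hv)
    _ ≤ ε * (2 * #Z) := by gcongr
    _ = 2 * ε * #Z := by ring

end IsCritical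

lemma one_half_lt_rpow {x τ : ℝ} {Q : ℕ} (hτ : 0 < τ) (hQτ : Q * τ ≤ 1)
    (hx : (1 / 2 : ℝ) ^ Q < x) : 1 / 2 < x ^ τ := by
  calc (1 / 2 : ℝ) = (1 / 2) ^ (1 : ℝ) := (Real.rpow_one _).symm
    _ ≤ (1 / 2) ^ (Q * τ) :=
      Real.rpow_le_rpow_of_exponent_ge (by norm_num) (by norm_num) hQτ
    _ = ((1 / 2 : ℝ) ^ Q) ^ τ := Real.rpow_natCast_mul (by norm_num) Q τ
    _ < x ^ τ := by gcongr

lemma two_lt_mul_of_two_lt_rpow {n x τ : ℝ} {Q : ℕ} (hτ : 0 < τ) (hQτ : Q * τ ≤ 1) (hn : 0 < n)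
    (hx : (1 / 2 : ℝ) ^ Q < x / 2) (h : 2 < n ^ τ) : 2 < x * n := by
  by_contra! hle
  have hxn : x / 2 ≤ n⁻¹ := by
    rw [← one_div, le_div_iff₀ hn]
    linarith
  have hlt := one_half_lt_rpow hτ hQτ (hx.trans_le hxn)
  rw [Real.inv_rpow hn.le, ← one_div] at hlt
  exact h.not_gt (lt_of_one_div_lt_one_div (by norm_num) hlt)

lemma exists_rpow_le_kappaOn {k ℓ : ℕ} (hk : 5 ≤ k) (hℓ : 2 ≤ ℓ) :
    ∃ τ : ℝ, 0 < τ ∧ ∀ (V : Type u) (G : SimpleGraph V),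
      ¬ cycleGraph k ⊴ G → (∀ m, ℓ ≤ m → ¬ cycleGraph m ⊴ Gᶜ) →
      ∀ W : Finset V, W.Nonempty → (#W : ℝ) ^ τ ≤ kappaOn G W := by
  obtain ⟨σ, y, hσ, hσ1, hy, hsparse⟩ := exists_forall_not_isCritical_of_sparse.{u} hk hℓ
  obtain ⟨θ, hθ, hθℓ⟩ : ∃ θ : ℝ, 0 < θ ∧ (3 * ℓ + 11) * θ = 1 :=
    ⟨1 / (3 * ℓ + 11), by positivity, by field_simp⟩
  obtain ⟨ε, hε, hεy, hεθ⟩ : ∃ ε : ℝ, 0 < ε ∧ ε ≤ y / 2 ∧ ε ≤ θ / 2 :=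
    ⟨_, lt_min (by positivity) (by positivity), min_le_left _ _, min_le_right _ _⟩
  obtain ⟨δ, hδ, -, hRödl⟩ := exists_isSparseTo_self_or.{u} (by omega : 1 ≤ k) (cycleGraph k) hε
  obtain ⟨Q, hQ⟩ := exists_pow_lt_of_lt_one (by positivity : 0 < θ * δ / 2)
    (by norm_num : (1 / 2 : ℝ) < 1)
  obtain ⟨τ, hτ, hτσ⟩ : ∃ τ : ℝ, 0 < τ ∧ (Q + 1 : ℕ) * τ = σ :=
    ⟨σ / (Q + 1 : ℕ), by positivity, mul_div_cancel₀ _ (by positivity)⟩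
  have hQτ : Q * τ ≤ 1 := by push_cast at hτσ; linarith
  have hθ1 : θ ≤ 1 / 11 := by nlinarith [(Nat.cast_nonneg ℓ : (0 : ℝ) ≤ ℓ)]
  refine ⟨τ, hτ, fun V G hGk hGℓ W hW => ?_⟩
  by_contra! hlt
  obtain ⟨X, -, hX2, hX, hXτ⟩ := exists_isCritical_subset_of_kappaOn_lt hτ hW hlt
  have hx : (0 : ℝ) < #X := by positivity
  have hXlarge : 2 < θ * δ * #X := two_lt_mul_of_two_lt_rpow hτ hQτ hx hQ hXτ
  obtain ⟨Y, hYX, hYne, hYcard, hY | hY⟩ := hRödl V G hGk X (card_pos.1 (by omega))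
  · obtain ⟨Z, hYZ, hZ, hZsparse⟩ := hX.exists_isCritical_of_isSparseTo hτ hYX hYne hYcard
      (hQ.trans (by nlinarith)) hε.le hY
    rw [hτσ] at hZ
    refine hsparse V G hGk hGℓ Z ?_ (fun v hv => (hZsparse v hv).trans (by gcongr; linarith)) hZ
    have hZ2 : (2 : ℝ) < #Z := by nlinarith
    exact_mod_cast hZ2.le
  · have hθY : θ * δ * #X ≤ θ * #Y := by
      rw [mul_assoc]
      gcongr
    have hna := (hX.compl.noAnticompletePair hτ (by positivity : 0 < θ * #Y)
      (one_half_lt_rpow hτ hQτ (by rw [lt_div_iff₀ hx]; nlinarith))).mono hYX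
    obtain ⟨m, hm, hcycle⟩ := hna.exists_long_cycle (by positivity)
      (fun v hv => by nlinarith [hY v hv]) hℓ (by nlinarith)
    exact hGℓ m hm hcycle

/-! ### Triangles and squares -/

lemma anticomplete_insert {S : Finset V} {v : V} (hS : Anticomplete G S S)
    (hv : ∀ s ∈ S, ¬ G.Adj s v) : Anticomplete G (insert v S) (insert v S) := by
  intro x hx y hy hxy
  rcases mem_insert.1 hx with rfl | hxS <;> rcases mem_insert.1 hy with rfl | hyS
  · exact G.irrefl hxy
  · exact hv y hyS hxy.symm
  · exact hv x hxS hxy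
  · exact hS x hxS y hyS hxy

lemma exists_adj_of_card_eq_alphaOn {W S : Finset V} (hS : Anticomplete G S S) (hSW : S ⊆ W)
    (hcard : #S = alphaOn G W) {u : V} (hu : u ∈ W) (huS : u ∉ S) : ∃ s ∈ S, G.Adj s u := by
  by_contra! h
  have hlarger := card_le_alphaOn (insert_subset hu hSW) (anticomplete_insert hS h)
  rw [card_insert_of_notMem huS] at hlarger
  omega

lemma card_neighborsIn_le_alphaOn (hG : ¬ cycleGraph 3 ⊴ G) (v : V) (W : Finset V) :
    #(neighborsIn G v W) ≤ alphaOn G W := by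
  refine card_le_alphaOn (neighborsIn_subset G v W) fun x hx y hy hxy => hG ?_
  have hvx := (mem_neighborsIn.1 hx).2
  have hvy := (mem_neighborsIn.1 hy).2
  refine cycleGraph_isIndContained_of_forall
    (fun i => if i = 0 then v else if i = 1 then x else y) fun i j hij hj => ?_
  interval_cases j <;> interval_cases i <;> simp [hvx, hvy, hxy, hvx.ne, hvy.ne, hxy.ne]

lemma card_le_of_triangle_free (hG : ¬ cycleGraph 3 ⊴ G) (W : Finset V) :
    #W ≤ alphaOn G W + alphaOn G W * alphaOn G W := by
  obtain ⟨S, hSW, hS, hcard⟩ := exists_card_eq_alphaOn G W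
  have hcover : W ⊆ S ∪ S.biUnion (fun s => neighborsIn G s W) := by
    intro u hu
    by_cases huS : u ∈ S
    · exact mem_union_left _ huS
    · obtain ⟨s, hs, hsu⟩ := exists_adj_of_card_eq_alphaOn hS hSW hcard hu huS
      exact mem_union_right _ (mem_biUnion.2 ⟨s, hs, mem_neighborsIn.2 ⟨hu, hsu⟩⟩)
  calc #W ≤ #S + #(S.biUnion fun s => neighborsIn G s W) :=
        (card_le_card hcover).trans (card_union_le _ _)
    _ ≤ #S + #S * alphaOn G W := by
      gcongr
      exact card_biUnion_le_card_mul _ _ _ fun s _ => card_neighborsIn_le_alphaOn hG s W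
    _ = alphaOn G W + alphaOn G W * alphaOn G W := by rw [hcard]

-- Two nonadjacent private neighbours of `s` could replace `s` in the maximum stable set `S`.
lemma card_privateNeighbors_le_alphaOn_compl {W S : Finset V} (hS : Anticomplete G S S)
    (hSW : S ⊆ W) (hcard : #S = alphaOn G W) {s : V} (hs : s ∈ S) :
    #(privateNeighbors G S s W) ≤ alphaOn Gᶜ W := by
  refine card_le_alphaOn (filter_subset _ _) fun x hx y hy hxy => ?_
  obtain ⟨hxW, hsx, hxpriv⟩ := mem_privateNeighbors.1 hx
  obtain ⟨hyW, hsy, hypriv⟩ := mem_privateNeighbors.1 hy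
  rw [compl_adj] at hxy
  have hxS : x ∉ S := fun h => hS s hs x h hsx
  have hyS : y ∉ S := fun h => hS s hs y h hsy
  have hstable_y : Anticomplete G (insert y (S.erase s)) (insert y (S.erase s)) :=
    anticomplete_insert (hS.mono (erase_subset _ _) (erase_subset _ _)) fun z hz hzy =>
      (mem_erase.1 hz).1 (hypriv z (mem_erase.1 hz).2 hzy)
  have hstable := anticomplete_insert (v := x) hstable_y fun z hz hzx => by
    obtain rfl | hz := mem_insert.1 hz
    · exact hxy.2 hzx.symm
    · exact (mem_erase.1 hz).1 (hxpriv z (mem_erase.1 hz).2 hzx)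
  have hlarger := card_le_alphaOn
    (insert_subset hxW (insert_subset hyW ((erase_subset s S).trans hSW))) hstable
  rw [card_insert_of_notMem (by simp [hxy.1, hxS]), card_insert_of_notMem (by simp [hyS]),
    card_erase_add_one hs] at hlarger
  omega

lemma card_inter_neighborsIn_le_alphaOn_compl (hG : ¬ cycleGraph 4 ⊴ G) {s t : V} (hne : s ≠ t)
    (hst : ¬ G.Adj s t) (W : Finset V) :
    #(neighborsIn G s W ∩ neighborsIn G t W) ≤ alphaOn Gᶜ W := by
  refine card_le_alphaOn (inter_subset_left.trans (neighborsIn_subset G s W))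
    fun x hx y hy hxy => hG ?_
  simp only [mem_inter, mem_neighborsIn] at hx hy
  obtain ⟨⟨-, hsx⟩, -, htx⟩ := hx
  obtain ⟨⟨-, hsy⟩, -, hty⟩ := hy
  rw [compl_adj] at hxy
  refine cycleGraph_isIndContained_of_forall
    (fun i => if i = 0 then s else if i = 1 then x else if i = 2 then t else y)
    fun i j hij hj => ?_
  interval_cases j <;> interval_cases i <;>
    simp [hsx, hsx.ne, htx.symm, htx.ne', hsy, hsy.ne, hty, hty.ne, hne, hst, hxy]

lemma card_le_of_square_free (hG : ¬ cycleGraph 4 ⊴ G) (W : Finset V) :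
    #W ≤ alphaOn G W + alphaOn G W * alphaOn Gᶜ W +
      alphaOn G W * alphaOn G W * alphaOn Gᶜ W := by
  obtain ⟨S, hSW, hS, hcard⟩ := exists_card_eq_alphaOn G W
  have hcover : W ⊆ S ∪ S.biUnion (fun s => privateNeighbors G S s W) ∪
      S.offDiag.biUnion (fun p => neighborsIn G p.1 W ∩ neighborsIn G p.2 W) := by
    intro u hu
    by_cases huS : u ∈ S
    · exact mem_union_left _ (mem_union_left _ huS)
    obtain ⟨s, hs, hsu⟩ := exists_adj_of_card_eq_alphaOn hS hSW hcard hu huS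
    by_cases hpriv : ∀ x ∈ S, G.Adj x u → x = s
    · exact mem_union_left _ (mem_union_right _
        (mem_biUnion.2 ⟨s, hs, mem_privateNeighbors.2 ⟨hu, hsu, hpriv⟩⟩))
    · push Not at hpriv
      obtain ⟨x, hx, hxu, hxs⟩ := hpriv
      exact mem_union_right _ (mem_biUnion.2 ⟨(x, s), mem_offDiag.2 ⟨hx, hs, hxs⟩,
        mem_inter.2 ⟨mem_neighborsIn.2 ⟨hu, hxu⟩, mem_neighborsIn.2 ⟨hu, hsu⟩⟩⟩)
  have hoffDiag : #S.offDiag ≤ #S * #S := by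
    rw [offDiag_card]
    exact Nat.sub_le _ _
  refine ((card_le_card hcover).trans (card_union_le _ _)).trans
    (Nat.add_le_add ((card_union_le _ _).trans (Nat.add_le_add hcard.le ?_)) ?_)
  · rw [← hcard]
    exact card_biUnion_le_card_mul _ _ _ fun s hs =>
      card_privateNeighbors_le_alphaOn_compl hS hSW hcard hs
  · rw [← hcard]
    refine (card_biUnion_le_card_mul _ _ _ fun p hp => ?_).trans
      (Nat.mul_le_mul_right _ hoffDiag)
    obtain ⟨hp₁, hp₂, hne⟩ := mem_offDiag.1 hp
    exact card_inter_neighborsIn_le_alphaOn_compl hG hne (hS _ hp₁ _ hp₂) W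

lemma card_le_pow_five {k : ℕ} (hk : k = 3 ∨ k = 4) (hG : ¬ cycleGraph k ⊴ G) {W : Finset V}
    (hW : W.Nonempty) : #W ≤ max (alphaOn G W) (alphaOn Gᶜ W) ^ 5 := by
  have hα : alphaOn G W ≤ max (alphaOn G W) (alphaOn Gᶜ W) := le_max_left _ _
  have hω : alphaOn Gᶜ W ≤ max (alphaOn G W) (alphaOn Gᶜ W) := le_max_right _ _
  have hM : 1 ≤ max (alphaOn G W) (alphaOn Gᶜ W) := (alphaOn_pos G hW).trans_le hα
  have hκ : kappaOn G W ≤ max (alphaOn G W) (alphaOn Gᶜ W) * max (alphaOn G W) (alphaOn Gᶜ W) :=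
    Nat.mul_le_mul hα hω
  generalize max (alphaOn G W) (alphaOn Gᶜ W) = M at *
  obtain rfl | hM2 := hM.eq_or_lt
  · by_contra! hcard
    have := two_le_kappaOn G (A := W) (by omega)
    omega
  have hle : #W ≤ M + M * M + M * M * M := by
    obtain rfl | rfl := hk
    · calc #W ≤ alphaOn G W + alphaOn G W * alphaOn G W := card_le_of_triangle_free hG W
        _ ≤ M + M * M := by gcongr
        _ ≤ M + M * M + M * M * M := Nat.le_add_right _ _
    · exact (card_le_of_square_free hG W).trans (by gcongr)
  have hM_sq : M ≤ M * M := Nat.le_mul_self M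
  have hM_cube : M * M ≤ M * M * M := Nat.le_mul_of_pos_right _ hM
  have hM_five : 4 * (M * M * M) ≤ M ^ 5 := by
    calc 4 * (M * M * M) ≤ M * M * (M * M * M) := by
          gcongr
          nlinarith
      _ = M ^ 5 := by ring
  omega

lemma alphaOn_univ_le_cliqueNum_compl [Fintype V] (G : SimpleGraph V) :
    alphaOn G univ ≤ Gᶜ.cliqueNum := by
  obtain ⟨S, -, hS, hcard⟩ := exists_card_eq_alphaOn G univ
  have hclique : Gᶜ.IsClique S := fun x hx y hy hxy => (compl_adj _ _ _).2 ⟨hxy, hS x hx y hy⟩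
  exact hcard ▸ hclique.card_le_cliqueNum

lemma max_alphaOn_univ_le [Fintype V] (G : SimpleGraph V) :
    max (alphaOn G univ) (alphaOn Gᶜ univ) ≤ max (alphaNum G) (omegaNum G) :=
  max_le_max (alphaOn_univ_le_cliqueNum_compl G)
    ((alphaOn_univ_le_cliqueNum_compl Gᶜ).trans_eq (by rw [compl_compl, omegaNum]))

lemma rpow_div_le_of_rpow_le_pow {n M τ : ℝ} {p : ℕ} (hn : 0 ≤ n) (hM : 0 ≤ M) (hp : p ≠ 0)
    (h : n ^ τ ≤ M ^ p) : n ^ (τ / p) ≤ M := by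
  rw [div_eq_mul_inv, Real.rpow_mul hn]
  calc (n ^ τ) ^ (p : ℝ)⁻¹ ≤ (M ^ p) ^ (p : ℝ)⁻¹ := by gcongr
    _ = M := Real.pow_rpow_inv_natCast hM hp

lemma exists_rpow_le_max_pow {k ℓ : ℕ} (hk : 3 ≤ k) (hℓ : 2 ≤ ℓ) :
    ∃ (p : ℕ) (τ : ℝ), p ≠ 0 ∧ 0 < τ ∧ ∀ (V : Type u) (G : SimpleGraph V),
      ¬ cycleGraph k ⊴ G → (∀ m, ℓ ≤ m → ¬ cycleGraph m ⊴ Gᶜ) → ∀ W : Finset V, W.Nonempty →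
      (#W : ℝ) ^ τ ≤ ((max (alphaOn G W) (alphaOn Gᶜ W) : ℕ) : ℝ) ^ p := by
  obtain hk5 | hk5 := lt_or_ge k 5
  · refine ⟨5, 1, by norm_num, one_pos, fun V G hGk _ W hW => ?_⟩
    rw [Real.rpow_one]
    exact_mod_cast card_le_pow_five (by omega) hGk hW
  · obtain ⟨τ, hτ, h⟩ := exists_rpow_le_kappaOn.{u} hk5 hℓ
    refine ⟨2, τ, by norm_num, hτ, fun V G hGk hGℓ W hW => (h V G hGk hGℓ W hW).trans ?_⟩
    rw [sq]
    exact_mod_cast Nat.mul_le_mul (le_max_left _ _) (le_max_right _ _)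

end

/-- The set consisting of the cycle `C_k` together with the complements of all cycles of
length at least `ℓ` has the Erdős–Hajnal property. -/
theorem stmt_5 (k ℓ : ℕ) (hk : 3 ≤ k) (hℓ : 3 ≤ ℓ) :
    ∃ τ : ℝ, 0 < τ ∧
      ∀ (V : Type) [Fintype V] (G : SimpleGraph V),
        ¬ Nonempty (cycleGraph k ↪g G) →
        (∀ m : ℕ, ℓ ≤ m → ¬ Nonempty ((cycleGraph m)ᶜ ↪g G)) →
        (Fintype.card V : ℝ) ^ τ ≤ ((max (alphaNum G) (omegaNum G) : ℕ) : ℝ) := by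
  obtain ⟨p, τ, hp, hτ, h⟩ := exists_rpow_le_max_pow.{0} hk (by omega : 2 ≤ ℓ)
  refine ⟨τ / p, by positivity, fun V _ G hGk hGℓ => ?_⟩
  rcases isEmpty_or_nonempty V with hV | hV
  · rw [Fintype.card_eq_zero, Nat.cast_zero, Real.zero_rpow (by positivity)]
    positivity
  have hGℓ' : ∀ m, ℓ ≤ m → ¬ cycleGraph m ⊴ Gᶜ := fun m hm hcycle =>
    hGℓ m hm (compl_compl G ▸ hcycle.compl)
  calc (Fintype.card V : ℝ) ^ (τ / p)
      ≤ ((max (alphaOn G Finset.univ) (alphaOn Gᶜ Finset.univ) : ℕ) : ℝ) :=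
        rpow_div_le_of_rpow_le_pow (Nat.cast_nonneg _) (Nat.cast_nonneg _) hp
          (h V G hGk hGℓ' _ Finset.univ_nonempty)
    _ ≤ ((max (alphaNum G) (omegaNum G) : ℕ) : ℝ) := mod_cast max_alphaOn_univ_le G
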